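/- arXiv:math/9906141 — 2 statements merged into one kernel-verified Lean document; each statement's English description precedes it below -/
import Mathlib

section
/- For a unital ring R, the right R-module R has the finite exchange property if and only if for every element a ∈ R there exists an idempotent e ∈ R such that e ∈ aR and 1 − e ∈ (1 − a)R. -/
universe u

/-- A right `R`-module `M` (= `Rᵐᵒᵖ`-module) has the *finite exchange property* if for
every right `R`-module `A` and internal direct sum decompositions
`A = M' ⊕ N = A₁ ⊕ ⋯ ⊕ Aₙ` with `M' ≅ M`, there are submodules `A'ᵢ ≤ Aᵢ` with
`A = M' ⊕ A'₁ ⊕ ⋯ ⊕ A'ₙ`.  Internal direct sums are expressed by independence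
(`iSupIndep`) together with supremum `⊤`. -/
def HasFiniteExchangeProperty (R : Type u) [Ring R] (M : Type u) [AddCommGroup M]
    [Module Rᵐᵒᵖ M] : Prop :=
  ∀ (A : Type u) [AddCommGroup A] [Module Rᵐᵒᵖ A]
    (M' N : Submodule Rᵐᵒᵖ A) (n : ℕ) (P : Fin n → Submodule Rᵐᵒᵖ A),
    Nonempty (M ≃ₗ[Rᵐᵒᵖ] M') → IsCompl M' N →
    iSupIndep P → (⨆ i, P i) = ⊤ →
    ∃ P' : Fin n → Submodule Rᵐᵒᵖ A,
      (∀ i, P' i ≤ P i) ∧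
      iSupIndep (fun o : Option (Fin n) => o.elim M' P') ∧
      (⨆ o : Option (Fin n), o.elim M' P') = ⊤


theorem suit_symm {S : Type u} [Ring S] (a e r s : S) (he : IsIdempotentElem e) (h1 : e = r * a)
    (h2 : 1 - e = s * (1 - a)) :
    ∃ f x y : S, IsIdempotentElem f ∧ f = a * x ∧ 1 - f = (1 - a) * y := by
  obtain ⟨t, ht⟩ : ∃ t, t = r - s := ⟨_, rfl⟩
  have e1 : e = a + t * a * (1 - a) := by
    have : e = a + e * (1 - a) - (1 - e) * a := by noncomm_ring
    rw [this]
    nth_rewrite 1 [h1]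
    rw [h2, ht]; noncomm_ring
  have ea : e = (1 + t * (1 - a)) * a := by rw [e1]; noncomm_ring
  have ea' : 1 - e = (1 - t * a) * (1 - a) := by rw [e1]; noncomm_ring
  have z1 : e * (1 - e) = 0 := by rw [mul_sub, mul_one, he.eq, sub_self]
  have z2 : (1 - e) * e = 0 := by rw [sub_mul, one_mul, he.eq, sub_self]
  obtain ⟨X, hX⟩ : ∃ X, X = 1 + t - t * a - a * t - t * a * (1 - a) * t := ⟨_, rfl⟩
  have X1 : X = (1 - t * a) * (1 + (1 - a) * t) := by rw [hX]; noncomm_ring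
  have X2 : X = (1 + t * (1 - a)) * (1 - a * t) := by rw [hX]; noncomm_ring
  have Xc : X * (a * (1 - a)) = 0 := by
    have : X * (a * (1 - a)) = ((1 - t * a) * (1 - a)) * ((1 + t * (1 - a)) * a) := by
      rw [X1]; noncomm_ring
    rw [this, ← ea, ← ea', z2]
  have k1 : e * ((1 - t * a) * (1 - a)) = 0 := by rw [← ea', z1]
  have k2 : (1 - e) * ((1 + t * (1 - a)) * a) = 0 := by rw [← ea, z2]
  have c1 : e * X = e * (1 - t * a) := by
    have : e * X = e * (1 - t * a) + e * ((1 - t * a) * (1 - a)) * t := by rw [X1]; noncomm_ring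
    rw [this, k1]; simp
  have c1' : e * X = e * X * a := by
    have : e * (1 - t * a) - e * (1 - t * a) * a = e * ((1 - t * a) * (1 - a)) := by noncomm_ring
    rw [k1] at this
    rw [c1]; exact sub_eq_zero.1 this
  have c2 : (1 - e) * X = (1 - e) * (1 + t * (1 - a)) := by
    have : (1 - e) * X = (1 - e) * (1 + t * (1 - a)) - (1 - e) * ((1 + t * (1 - a)) * a) * t := by
      rw [X2]; noncomm_ring
    rw [this, k2]; simp
  have c2' : (1 - e) * X * a = 0 := by
    rw [c2, mul_assoc, k2]
  obtain ⟨v, hv⟩ : ∃ v, v = e * X - (1 - e) * X := ⟨_, rfl⟩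
  have vc : v * (a * (1 - a)) = 0 := by
    rw [hv, sub_mul, mul_assoc, mul_assoc, Xc]; simp
  have ev : (1 - e) * v = - ((1 - e) * X) := by
    have : (1 - e) * v = (1 - e) * e * X - (1 - e) * X + (1 - e) * e * X := by
      rw [hv]; noncomm_ring
    rw [this, z2]; simp
  have va : v * a = e * X := by
    rw [hv, sub_mul, ← c1', c2', sub_zero]
  obtain ⟨u, hu⟩ : ∃ u, u = t + v := ⟨_, rfl⟩
  have Xu : 1 + u - u * a - a * u - u * a * (1 - a) * u = 0 := by
    have : 1 + u - u * a - a * u - u * a * (1 - a) * u =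
      X + (1 - (a + t * a * (1 - a))) * v - v * a - v * (a * (1 - a)) * u := by
      rw [hX, hu]; noncomm_ring
    rw [this, ← e1, ev, va, vc]; noncomm_ring
  refine ⟨a * (1 + (1 - a) * u), _, 1 - a * u, ?_, rfl, by noncomm_ring⟩
  have : a * (1 + (1 - a) * u) - a * (1 + (1 - a) * u) * (a * (1 + (1 - a) * u)) =
    a * (1 - a) * (1 + u - u * a - a * u - u * a * (1 - a) * u) := by noncomm_ring
  rw [Xu, mul_zero] at this
  exact (sub_eq_zero.1 this).symm

theorem orth {S : Type u} [Ring S]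
    (H : ∀ a : S, ∃ e r s : S, IsIdempotentElem e ∧ e = r * a ∧ 1 - e = s * (1 - a)) :
    ∀ (n : ℕ) (h : S) (a : Fin n → S), h * h = h → (∀ i, a i * h = a i) → (∀ i, h * a i = a i) →
      ∑ i, a i = h → ∃ e r : Fin n → S, (∀ i, e i = r i * a i) ∧ (∀ i, e i * e i = e i) ∧
        (∀ i j, i ≠ j → e i * e j = 0) ∧ ∑ i, e i = h := by
  intro n
  induction n with
  | zero =>
    intro h a _ _ _ hs
    exact ⟨fun _ => 0, fun _ => 0, by simp, by simp, by simp, by simpa using hs⟩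
  | succ n ih =>
    intro h a hh ah ha hs
    obtain ⟨g, r, s, gg, hg, gh, gr, gs⟩ : ∃ g r s : S, g * g = g ∧ h * g = g ∧ g * h = g ∧
        g = r * a 0 ∧ h - g = s * (h - a 0) := by
      obtain ⟨k, r, s, kk, kr, ks⟩ := H (a 0 + (1 - h))
      have ks' : 1 - k = s * (h - a 0) := by rw [ks]; congr 1; noncomm_ring
      have q : k * h = k - (1 - h) := by
        have : (1 - k) * (1 - h) = 0 := by
          rw [ks', mul_assoc]
          have : (h - a 0) * (1 - h) = 0 := by
            rw [mul_sub, mul_one, sub_mul, hh, ah, sub_self]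
          rw [this, mul_zero]
        have h2 : (1 - k) * (1 - h) = (1 - h) - k + k * h := by noncomm_ring
        rw [this] at h2
        rw [eq_comm, ← sub_eq_zero, ← neg_eq_zero, h2]; noncomm_ring
      have h0 : h * (1 - h) = 0 := by rw [mul_sub, hh, mul_one, sub_self]
      refine ⟨h * k * h, h * r, h * s, ?_, by simp only [← mul_assoc, hh], by simp only [mul_assoc, hh],
        ?_, ?_⟩
      · have : h * k * h * (h * k * h) = h * (k * (h * h)) * k * h := by noncomm_ring
        rw [this, hh, q]
        have : h * (k - (1 - h)) * k * h = h * (k * k) * h - h * (1 - h) * k * h := by noncomm_ring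
        rw [this, h0, kk.eq]; simp
      · have : h * k * h = h * r * (a 0 * h) + h * r * (h - h * h) := by
          rw [kr]; noncomm_ring
        rw [this, hh, ah]; simp
      · have : h - h * k * h = h * (1 - k) * h := by
          have : h * (1 - k) * h = h * h - h * k * h := by noncomm_ring
          rw [this, hh]
        rw [this, ks', mul_assoc, mul_assoc, sub_mul, hh, ah, mul_assoc]
    obtain ⟨h', hh'⟩ : ∃ h', h' = h - g := ⟨_, rfl⟩
    have h'h' : h' * h' = h' := by
      rw [hh', mul_sub, sub_mul, sub_mul, hh, gg, hg, gh]; simp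
    have h'h : h * h' = h' := by rw [hh', mul_sub, hh, hg]
    have hsum : ∑ i : Fin n, s * a i.succ = h' := by
      rw [← Finset.mul_sum, hh', gs]; congr 1
      rw [Fin.sum_univ_succ] at hs
      rw [← hs]; noncomm_ring
    obtain ⟨e, ρ, er, ee, eo, es⟩ := ih h' (fun i => h' * (s * a i.succ) * h') h'h'
      (fun i => by rw [mul_assoc, h'h']) (fun i => by simp only [← mul_assoc, h'h'])
      (by rw [← Finset.sum_mul, ← Finset.mul_sum, hsum, h'h', h'h'])
    have he : ∀ i, h' * e i = e i := by
      intro i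
      rw [← es, Finset.sum_mul, Finset.sum_eq_single i]
      · exact ee i
      · intro j _ hj; exact eo j i hj
      · simp
    obtain ⟨w, hw⟩ : ∃ w : Fin n → S, ∀ i, w i = e i * ρ i * h' * s * a i.succ := ⟨_, fun _ => rfl⟩
    have wh : ∀ i, w i * h' = e i := by
      intro i
      have : w i * h' = e i * (ρ i * (h' * (s * a i.succ) * h')) := by rw [hw]; noncomm_ring
      rw [this, ← er, ee]
    have ew : ∀ i, e i * w i = w i := by
      intro i; rw [hw]; simp only [← mul_assoc, ee]
    have h'w : ∀ i, h' * w i = w i := by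
      intro i; rw [← ew, ← mul_assoc, he]
    have ww : ∀ i j, w i * w j = e i * e j * w j := by
      intro i j
      rw [← wh i, mul_assoc, mul_assoc, ew, h'w]
    have www : ∀ i, w i * w i = w i := by
      intro i; rw [ww, ee, ew]
    have wo : ∀ i j, i ≠ j → w i * w j = 0 := by
      intro i j hij; rw [ww, eo i j hij, zero_mul]
    have wH : ∀ i, w i * h = w i := by
      intro i; rw [hw, mul_assoc, ah]
    have hW : ∀ i, h * w i = w i := by
      intro i; rw [← h'w, ← mul_assoc, h'h]
    obtain ⟨W, WW⟩ : ∃ W, W = ∑ i, w i := ⟨_, rfl⟩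
    have wW : ∀ i, w i * W = w i := by
      intro i
      rw [WW, Finset.mul_sum, Finset.sum_eq_single i]
      · exact www i
      · intro j _ hj; exact wo i j hj.symm
      · simp
    have Ww : ∀ i, W * w i = w i := by
      intro i
      rw [WW, Finset.sum_mul, Finset.sum_eq_single i]
      · exact www i
      · intro j _ hj; exact wo j i hj
      · simp
    have W2 : W * W = W := by
      have : W * W = ∑ i, w i * W := by rw [← Finset.sum_mul, ← WW]
      rw [this]; simp only [wW]; exact WW.symm
    have WH : W * h = W := by rw [WW, Finset.sum_mul]; simp only [wH]
    have HW : h * W = W := by rw [WW, Finset.mul_sum]; simp only [hW]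
    have Wh' : W * h' = h' := by rw [WW, Finset.sum_mul]; simp only [wh, es]
    have k : h - W = (h - W) * r * a 0 := by
      rw [mul_assoc, ← gr]
      have : g = h - h' := by rw [hh']; noncomm_ring
      rw [this, mul_sub, sub_mul, sub_mul, hh, WH, h'h, Wh']; simp
    refine ⟨Fin.cons (h - W) w, Fin.cons ((h - W) * r) (fun i => e i * ρ i * h' * s), ?_, ?_, ?_, ?_⟩
    · intro i
      refine Fin.cases ?_ (fun i => ?_) i
      · simpa using k
      · simpa using hw i
    · intro i
      refine Fin.cases ?_ (fun i => ?_) i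
      · simp only [Fin.cons_zero]
        rw [mul_sub, sub_mul, sub_mul, hh, WH, HW, W2]; simp
      · simpa using www i
    · intro i j
      refine Fin.cases ?_ (fun i => ?_) i <;> refine Fin.cases ?_ (fun j => ?_) j
      · simp
      · intro _; simp [sub_mul, hW, Ww]
      · intro _; simp [mul_sub, wH, wW]
      · intro hij
        simpa using wo i j (fun h => hij (by rw [h]))
    · rw [Fin.sum_univ_succ]; simp [← WW]

def mulL {R : Type u} [Ring R] (c : R) : R →ₗ[Rᵐᵒᵖ] R where
  toFun x := c * x
  map_add' := mul_add c
  map_smul' r x := by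
    simp only [MulOpposite.smul_eq_mul_unop, RingHom.id_apply, mul_assoc]

@[simp] theorem mulL_apply {R : Type u} [Ring R] (c x : R) : mulL c x = c * x := rfl

theorem lin_apply {R : Type u} [Ring R] (F : R →ₗ[Rᵐᵒᵖ] R) (x : R) : F x = F 1 * x := by
  have := F.map_smul (MulOpposite.op x) 1
  simpa [MulOpposite.smul_eq_mul_unop] using this

theorem exch_left {R : Type u} [Ring R] (H : HasFiniteExchangeProperty R R) (a : R) :
    ∃ e r s : R, IsIdempotentElem e ∧ e = r * a ∧ 1 - e = s * (1 - a) := by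
  let f : R →ₗ[Rᵐᵒᵖ] R × R := (mulL a).prod (mulL (1 - a))
  let g : R × R →ₗ[Rᵐᵒᵖ] R := LinearMap.fst Rᵐᵒᵖ R R + LinearMap.snd Rᵐᵒᵖ R R
  have hf : ∀ x, f x = (a * x, (1 - a) * x) := fun x => rfl
  have hg : ∀ z, g z = z.1 + z.2 := fun z => rfl
  have gf : ∀ x, g (f x) = x := by intro x; rw [hf, hg]; noncomm_ring
  have finj : Function.Injective f := Function.LeftInverse.injective gf
  have hc : IsCompl (LinearMap.range f) (LinearMap.ker g) := by
    constructor
    · rw [Submodule.disjoint_def]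
      rintro _ ⟨x, rfl⟩ hx
      rw [LinearMap.mem_ker, gf] at hx
      rw [hx, map_zero]
    · rw [codisjoint_iff, eq_top_iff]
      intro z _
      rw [Submodule.mem_sup]
      exact ⟨f (g z), ⟨_, rfl⟩, z - f (g z), by simp [gf], by simp⟩
  let P : Fin 2 → Submodule Rᵐᵒᵖ (R × R) :=
    ![LinearMap.ker (LinearMap.snd Rᵐᵒᵖ R R), LinearMap.ker (LinearMap.fst Rᵐᵒᵖ R R)]
  have P0 : ∀ z ∈ P 0, z.2 = 0 := fun z hz => hz
  have P1 : ∀ z ∈ P 1, z.1 = 0 := fun z hz => hz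
  obtain ⟨P', le, ind, top⟩ := H (R × R) _ _ 2 P ⟨LinearEquiv.ofInjective f finj⟩ hc
    (by
      rw [iSupIndep_pair (i := (0 : Fin 2)) (j := 1) (by simp) (by decide)]
      rw [Submodule.disjoint_def]
      intro z h0 h1
      exact Prod.ext (P1 z h1) (P0 z h0))
    (by
      rw [eq_top_iff]
      intro z _
      have : z = (z.1, 0) + (0, z.2) := by simp
      rw [this]
      exact add_mem (Submodule.mem_iSup_of_mem 0 (show ((z.1, 0) : R × R) ∈ P 0 from rfl))
        (Submodule.mem_iSup_of_mem 1 (show ((0, z.2) : R × R) ∈ P 1 from rfl)))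
  let Q := P' 0 ⊔ P' 1
  have dis : ∀ x, f x ∈ Q → x = 0 := by
    intro x hx
    have h1 := ind none
    rw [Submodule.disjoint_def] at h1
    apply finj
    rw [map_zero]
    refine h1 _ ⟨x, rfl⟩ ?_
    have : Q ≤ ⨆ j : Option (Fin 2), ⨆ (_ : j ≠ none), j.elim (LinearMap.range f) P' :=
      sup_le (le_iSup₂_of_le (some 0) (by simp) le_rfl) (le_iSup₂_of_le (some 1) (by simp) le_rfl)
    exact this hx
  have dec : ∀ z, ∃ x, ∃ y ∈ P' 0, ∃ w ∈ P' 1, z = f x + (y + w) := by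
    intro z
    have hz : z ∈ (⊤ : Submodule Rᵐᵒᵖ (R × R)) := trivial
    have hle : (⨆ o : Option (Fin 2), o.elim (LinearMap.range f) P') ≤
        LinearMap.range f ⊔ Q := by
      refine iSup_le ?_
      rintro (_ | i)
      · exact le_sup_left
      · refine le_trans ?_ le_sup_right
        fin_cases i
        · exact le_sup_left
        · exact le_sup_right
    rw [← top] at hz
    obtain ⟨_, ⟨x, rfl⟩, q, hq, h⟩ := Submodule.mem_sup.1 (hle hz)
    obtain ⟨y, hy, w, hw, rfl⟩ := Submodule.mem_sup.1 hq
    exact ⟨x, y, hy, w, hw, h.symm⟩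
  obtain ⟨p, y, hy, w, hw, h⟩ := dec (1, 0)
  obtain ⟨q, y', hy', w', hw', h'⟩ := dec (0, 1)
  have sm : ∀ (z : R × R) (c : R), MulOpposite.op c • z = (z.1 * c, z.2 * c) := fun z c => rfl
  have fs : ∀ x c, MulOpposite.op c • f x = f (x * c) := by
    intro x c; rw [sm, hf, hf]; simp [mul_assoc]
  have k1 : 1 = p * a + q * (1 - a) := by
    rw [← sub_eq_zero]
    apply dis
    have : f (1 - (p * a + q * (1 - a))) =
        MulOpposite.op a • (y + w) + MulOpposite.op (1 - a) • (y' + w') := by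
      have e1 : f 1 = MulOpposite.op a • ((1, 0) : R × R) +
          MulOpposite.op (1 - a) • ((0, 1) : R × R) := by
        rw [hf, sm, sm]; simp
      rw [map_sub, map_add, ← fs, ← fs, e1, h, h', smul_add, smul_add _ (f q)]
      abel
    rw [this]
    exact add_mem (Submodule.smul_mem _ _ (Submodule.add_mem_sup hy hw))
      (Submodule.smul_mem _ _ (Submodule.add_mem_sup hy' hw'))
  have k2 : p * (1 - a * p) = 0 := by
    have y1 : y = (1 - a * p, 0) := by
      have h1 := congrArg Prod.fst h
      have w1 := P1 w (le 1 hw)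
      have y2 := P0 y (le 0 hy)
      refine Prod.ext ?_ y2
      simp only [hf, Prod.fst_add, w1, add_zero] at h1
      simp only [h1]; abel
    apply dis
    have : f (p * (1 - a * p)) = y - MulOpposite.op (1 - a * p) • (y + w) := by
      have : y = MulOpposite.op (1 - a * p) • ((1, 0) : R × R) := by rw [sm, y1]; simp
      rw [← fs]
      conv_rhs => rw [this]
      conv_rhs => enter [1]; rw [h]
      rw [← this, ← smul_sub]; congr 1; abel
    rw [this]
    exact sub_mem (Submodule.mem_sup_left hy) (Submodule.smul_mem _ _ (Submodule.add_mem_sup hy hw))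
  refine ⟨p * a, p, q, ?_, rfl, ?_⟩
  · have : p * a - p * a * (p * a) = p * (1 - a * p) * a := by noncomm_ring
    rw [k2, zero_mul] at this
    exact (sub_eq_zero.1 this).symm
  · rw [sub_eq_iff_eq_add, add_comm]; exact k1

theorem left_exch {R : Type u} [Ring R]
    (H : ∀ (n : ℕ) (a : Fin n → R), 
      ∑ i, a i = 1 → ∃ e r : Fin n → R, (∀ i, e i = r i * a i) ∧ (∀ i, e i * e i = e i) ∧
        (∀ i j, i ≠ j → e i * e j = 0) ∧ ∑ i, e i = 1) : HasFiniteExchangeProperty R R := by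
  classical
  intro A _ _ M' N n P ⟨φ⟩ hMN ind top
  let f : R →ₗ[Rᵐᵒᵖ] A := M'.subtype ∘ₗ φ.toLinearMap
  let g : A →ₗ[Rᵐᵒᵖ] R := φ.symm.toLinearMap ∘ₗ Submodule.projectionOnto M' N hMN
  have gf : ∀ x, g (f x) = x := by intro x; simp [f, g]
  have fM : ∀ z ∈ M', ∃ x, z = f x := fun z hz => ⟨φ.symm ⟨z, hz⟩, by simp [f]⟩
  have fM' : ∀ x, f x ∈ M' := fun x => (φ x).2
  have hc : ∀ i, IsCompl (P i) (⨆ j ≠ i, P j) := by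
    intro i
    refine ⟨ind i, ?_⟩
    rw [codisjoint_iff, eq_top_iff, ← top]
    refine iSup_le fun j => ?_
    by_cases hj : j = i
    · subst hj; exact le_sup_left
    · exact le_trans (le_iSup₂_of_le j hj le_rfl) le_sup_right
  let ε : Fin n → A →ₗ[Rᵐᵒᵖ] A := fun i => Submodule.projection (P i) _ (hc i)
  have εm : ∀ i z, ε i z ∈ P i := fun i z => Submodule.projection_apply_mem _ _
  have εs : ∀ i, ∀ z ∈ P i, ε i z = z := fun i z hz =>
    Submodule.projection_apply_of_mem_left _ hz
  have ε0 : ∀ i j, i ≠ j → ∀ z ∈ P j, ε i z = 0 := by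
    intro i j hij z hz
    refine (Submodule.projection_apply_eq_zero_iff (hc i)).2 ?_
    exact (le_iSup₂_of_le (f := fun j (_ : j ≠ i) => P j) j hij.symm le_rfl) hz
  have εsum : ∀ z, ∑ i, ε i z = z := by
    intro z
    have hz : z ∈ ⨆ i, P i := by rw [top]; trivial
    induction hz using Submodule.iSup_induction' with
    | mem i z hz =>
      rw [Finset.sum_eq_single i]
      · exact εs i z hz
      · intro j _ hj; exact ε0 j i hj z hz
      · simp
    | zero => simp
    | add x y _ _ hx hy => simp only [map_add, Finset.sum_add_distrib, hx, hy]
  obtain ⟨e, r, er, ee, eo, es⟩ := H n (fun i => g (ε i (f 1))) (by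
    rw [← map_sum, εsum, gf])
  let p : Fin n → A →ₗ[Rᵐᵒᵖ] R := fun i => mulL (e i * r i) ∘ₗ g ∘ₗ ε i
  have hp : ∀ i z, p i z = e i * r i * g (ε i z) := fun i z => rfl
  have pf : ∀ i x, p i (f x) = e i * x := by
    intro i x
    have := lin_apply (p i ∘ₗ f) x
    simp only [LinearMap.comp_apply] at this
    rw [this, hp, mul_assoc (e i), ← er, ee]
  have ep : ∀ i j z, e i * p j z = if i = j then p i z else 0 := by
    intro i j z
    rw [hp]
    split_ifs with h
    · subst h; rw [hp]; simp only [← mul_assoc, ee]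
    · simp only [← mul_assoc, eo i j h, zero_mul]
  have pε : ∀ i z, p i (ε i z) = p i z := by
    intro i z; rw [hp, hp, εs i _ (εm i z)]
  have p0 : ∀ i j, i ≠ j → ∀ z ∈ P j, p i z = 0 := by
    intro i j hij z hz; rw [hp, ε0 i j hij z hz]; simp
  let π : A →ₗ[Rᵐᵒᵖ] R := ∑ i, p i
  have hπ : ∀ z, π z = ∑ i, p i z := fun z => by simp [π]
  have πf : ∀ x, π (f x) = x := by
    intro x; rw [hπ]; simp only [pf]; rw [← Finset.sum_mul, es, one_mul]
  have πP : ∀ i, ∀ z ∈ P i, π z = p i z := by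
    intro i z hz
    rw [hπ, Finset.sum_eq_single i]
    · intro j _ hj; exact p0 j i hj z hz
    · simp
  have eπ : ∀ i z, e i * π z = p i z := by
    intro i z; rw [hπ, Finset.mul_sum]; simp only [ep]; simp
  refine ⟨fun i => P i ⊓ LinearMap.ker π, fun i => inf_le_left, ?_, ?_⟩
  · rw [iSupIndep_iff_finsetSum_eq_zero_imp_eq_zero] at ind ⊢
    intro s v hv hs
    obtain ⟨w, hw⟩ : ∃ w : Option (Fin n) → A, ∀ o, w o = if o ∈ s then v o else 0 :=
      ⟨_, fun _ => rfl⟩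
    have hwm : ∀ o : Option (Fin n), w o ∈ o.elim M' (fun i => P i ⊓ LinearMap.ker π) := by
      intro o
      rw [hw]
      split_ifs with h
      · exact hv o h
      · exact zero_mem _
    have hws : ∑ o, w o = 0 := by
      simp only [hw]
      rw [Finset.sum_ite_mem, Finset.univ_inter, hs]
    rw [Fintype.sum_option] at hws
    have hk : ∀ i, π (w (some i)) = 0 := fun i => (hwm (some i)).2
    obtain ⟨x, hx⟩ := fM _ (hwm none)
    have hn : w none = 0 := by
      have := congrArg π hws
      rw [map_add, map_sum, hx, πf, map_zero] at this
      simp only [hk, Finset.sum_const_zero, add_zero] at this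
      rw [hx, this, map_zero]
    rw [hn, zero_add] at hws
    have hsome := ind Finset.univ (fun i => w (some i)) (fun i _ => (hwm (some i)).1) hws
    intro o ho
    have h2 : w o = v o := by rw [hw, if_pos ho]
    rw [← h2]
    cases o with
    | none => exact hn
    | some i => exact hsome i (Finset.mem_univ i)
  · rw [eq_top_iff]
    intro z _
    have : z = f (π z) + ∑ i, (ε i z - ε i (f (π z))) := by
      rw [Finset.sum_sub_distrib, εsum, εsum]; abel
    rw [this]
    refine add_mem (Submodule.mem_iSup_of_mem none (fM' _)) (sum_mem fun i _ =>
      Submodule.mem_iSup_of_mem (some i) ?_)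
    have hm := sub_mem (εm i z) (εm i (f (π z)))
    refine ⟨hm, ?_⟩
    rw [SetLike.mem_coe, LinearMap.mem_ker, πP i _ hm, map_sub, pε, pε, pf, eπ, sub_self]

theorem stmt15 (R : Type u) [Ring R] :
    HasFiniteExchangeProperty R R ↔
      ∀ a : R, ∃ e r s : R, IsIdempotentElem e ∧ e = a * r ∧ 1 - e = (1 - a) * s := by
  constructor
  · intro H a
    obtain ⟨e, r, s, he, h1, h2⟩ := exch_left H a
    exact suit_symm a e r s he h1 h2
  · intro H
    refine left_exch fun n a ha => orth ?_ n 1 a (by simp) (by simp) (by simp) ha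
    intro a
    obtain ⟨e, r, s, he, h1, h2⟩ := H a
    obtain ⟨f, x, y, hf, h3, h4⟩ := suit_symm (MulOpposite.op a) (MulOpposite.op e)
      (MulOpposite.op r) (MulOpposite.op s)
      (by unfold IsIdempotentElem; rw [← MulOpposite.op_mul, he.eq])
      (by rw [← MulOpposite.op_mul, h1])
      (by rw [← MulOpposite.op_one, ← MulOpposite.op_sub, ← MulOpposite.op_sub,
        ← MulOpposite.op_mul, h2])
    refine ⟨f.unop, x.unop, y.unop, ?_, ?_, ?_⟩
    · have := congrArg MulOpposite.unop hf.eq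
      rwa [MulOpposite.unop_mul] at this
    · have := congrArg MulOpposite.unop h3
      rwa [MulOpposite.unop_mul] at this
    · have := congrArg MulOpposite.unop h4
      simpa using this
end

section
/- Let A be a separative unital C*-algebra with real rank zero, let p, q ∈ A be projections, and let B = closure(ApA) + ℂ·1, a unital sub-C*-algebra of A. Then p and q are homotopic in A if and only if q ∈ B and p and q are unitarily equivalent in B. -/
universe u

namespace Sep18
open Set Topology
set_option linter.all false

section basic
variable {A : Type u} [CStarAlgebra A] [PartialOrder A] [StarOrderedRing A]

noncomputable def K (a : A) : A := cfc (fun x : ℝ => (√x)⁻¹) a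

lemma spec_pos {a : A} (h0 : 0 ≤ a) (hu : IsUnit a) : ∀ x ∈ spectrum ℝ a, 0 < x := by
  intro x hx
  refine lt_of_le_of_ne (spectrum_nonneg_of_nonneg h0 hx) ?_
  rintro rfl
  exact (spectrum.zero_notMem_iff ℝ).mpr hu hx

lemma contOn_fn : ContinuousOn (fun x : ℝ => (√x)⁻¹) (Ioi 0) :=
  ContinuousOn.inv₀ (Real.continuous_sqrt.continuousOn) (fun x hx => (Real.sqrt_pos.mpr hx).ne')

lemma K_sa (a : A) : IsSelfAdjoint (K a) := IsSelfAdjoint.cfc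

lemma K_comm {a x : A} (h : Commute a x) : Commute (K a) x := h.cfc_real _

lemma K_spec {a : A} (h0 : 0 ≤ a) (hu : IsUnit a) : K a * K a * a = 1 := by
  have hc : ContinuousOn (fun x : ℝ => (√x)⁻¹) (spectrum ℝ a) :=
    contOn_fn.mono (fun x hx => spec_pos h0 hu x hx)
  have hsa : IsSelfAdjoint a := .of_nonneg h0
  have h1 : K a * K a * a = cfc (fun x : ℝ => (√x)⁻¹ * (√x)⁻¹ * x) a := by
    rw [cfc_mul (fun x : ℝ => (√x)⁻¹ * (√x)⁻¹) (fun x => x) a (hc.mul hc) continuousOn_id,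
      cfc_mul _ _ a hc hc, cfc_id' ℝ a]
    rfl
  rw [h1, ← cfc_one ℝ a]
  refine cfc_congr fun x hx => ?_
  have hx := spec_pos h0 hu x hx
  have := Real.mul_self_sqrt hx.le
  have h3 := (Real.sqrt_pos.mpr hx).ne'
  simp only [Pi.one_apply]
  field_simp
  nlinarith

lemma K_mem (S : StarSubalgebra ℂ A) (hS : IsClosed (S : Set A)) {a : A} (ha : a ∈ S) : K a ∈ S :=
  cfc_mem (𝕜' := ℂ) (hs := hS) _ ha

lemma K_one : K (1 : A) = 1 := by
  have := cfc_algebraMap (A := A) (R := ℝ) 1 (fun x : ℝ => (√x)⁻¹) 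
  simpa [K] using this

lemma K_cont {X : Type*} [TopologicalSpace X] {a : X → A} (ha : Continuous a)
    (h0 : ∀ x, 0 ≤ a x) (hu : ∀ x, IsUnit (a x)) : Continuous fun x => K (a x) := by
  refine Continuous.cfc_of_mem_nhdsSet (s := Ioi (0:ℝ)) _ ?_ ha
    (fun x => IsSelfAdjoint.of_nonneg (h0 x)) contOn_fn
  refine isOpen_Ioi.mem_nhdsSet.mpr ?_
  simp only [iUnion_subset_iff]
  exact fun x y hy => spec_pos (h0 x) (hu x) y hy

noncomputable def N (g : A) : A := g * K (star g * g)

lemma isUnit_ss {g : A} (h : IsUnit g) : IsUnit (star g * g) := h.star.mul h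

lemma N_unitary {g : A} (h : IsUnit g) : N g ∈ unitary A := by
  have hk := K_spec (star_mul_self_nonneg g) (isUnit_ss h)
  have hc : Commute (K (star g * g)) (star g * g) := K_comm (Commute.refl _)
  have h1 : star (N g) * N g = 1 := by
    simp only [N, star_mul, (K_sa (star g * g)).star_eq]
    calc K (star g * g) * star g * (g * K (star g * g)) 
        = K (star g * g) * ((star g * g) * K (star g * g)) := by simp only [mul_assoc]
      _ = 1 := by rw [← hc.eq, ← mul_assoc, hk]
  have hu : IsUnit (N g) := by
    refine h.mul ?_
    refine ⟨⟨K (star g * g), K (star g * g) * (star g * g), ?_, ?_⟩, rfl⟩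
    · rw [← mul_assoc, hk]
    · rw [mul_assoc, ← hc.eq, ← mul_assoc, hk]
  rw [Unitary.mem_iff]
  refine ⟨h1, ?_⟩
  obtain ⟨v, hv⟩ := hu
  rw [← hv] at h1 ⊢
  have : star (v:A) = ((v⁻¹ : Aˣ) : A) := by
    rw [← mul_one (star (v:A)), ← v.mul_inv, ← mul_assoc, h1, one_mul]
  rw [this, v.mul_inv]

lemma N_mem (S : StarSubalgebra ℂ A) (hS : IsClosed (S : Set A)) {a : A} (ha : a ∈ S) : N a ∈ S :=
  mul_mem ha (K_mem S hS (mul_mem (star_mem ha) ha))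

lemma N_cont {X : Type*} [TopologicalSpace X] {a : X → A} (ha : Continuous a)
    (hu : ∀ x, IsUnit (a x)) : Continuous fun x => N (a x) :=
  ha.mul (K_cont (ha.star.mul ha) (fun _ => star_mul_self_nonneg _) fun x => isUnit_ss (hu x))

lemma N_of_unitary {g : A} (h : g ∈ unitary A) : N g = g := by
  rw [N, (Unitary.mem_iff.mp h).1, K_one, mul_one]

lemma N_sa {s : A} (hs : IsSelfAdjoint s) : IsSelfAdjoint (N s) := by
  have : Commute (K (star s * s)) s := K_comm (by rw [hs.star_eq]; exact (Commute.refl s).mul_left (Commute.refl s))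
  rw [N, isSelfAdjoint_iff, star_mul, (K_sa _).star_eq, hs.star_eq]
  rw [hs.star_eq] at this
  exact this.eq

lemma N_conj {z r q : A} (hz : IsUnit z) (hr : IsSelfAdjoint r) (hq : IsSelfAdjoint q)
    (h : z * r = q * z) : N z * r * star (N z) = q := by
  have h' : r * star z = star z * q := by
    have := congrArg star h
    simpa [hr.star_eq, hq.star_eq] using this
  have hc : Commute (star z * z) r := by
    show star z * z * r = r * (star z * z)
    rw [mul_assoc, h, ← mul_assoc, ← h', mul_assoc]
  have : N z * r = q * N z := by
    rw [N, mul_assoc, (K_comm hc).eq, ← mul_assoc, h, mul_assoc]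
  rw [this, mul_assoc, (Unitary.mem_iff.mp (N_unitary hz)).2, mul_one]

def U0 (S : StarSubalgebra ℂ A) (g : A) : Prop :=
  ∃ γ : C(unitInterval, A), (∀ t, γ t ∈ unitary A ∧ γ t ∈ S) ∧ γ 0 = 1 ∧ γ 1 = g

lemma U0.mul {S : StarSubalgebra ℂ A} {g h : A} (hg : U0 S g) (hh : U0 S h) : U0 S (g * h) := by
  obtain ⟨a, ha, ha0, ha1⟩ := hg
  obtain ⟨b, hb, hb0, hb1⟩ := hh
  exact ⟨a * b, fun t => ⟨mul_mem (ha t).1 (hb t).1, mul_mem (ha t).2 (hb t).2⟩,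
    by simp [ha0, hb0], by simp [ha1, hb1]⟩

lemma U0.star {S : StarSubalgebra ℂ A} {g : A} (hg : U0 S g) : U0 S (star g) := by
  obtain ⟨a, ha, ha0, ha1⟩ := hg
  exact ⟨⟨fun t => Star.star (a t), a.continuous.star⟩, fun t => ⟨Unitary.star_mem (ha t).1, star_mem (ha t).2⟩,
    by simp [ha0], by simp [ha1]⟩

lemma U0.one {S : StarSubalgebra ℂ A} : U0 S (1 : A) :=
  ⟨⟨fun _ => 1, continuous_const⟩, fun _ => ⟨one_mem _, one_mem _⟩, rfl, rfl⟩

lemma U0.unitary {S : StarSubalgebra ℂ A} {g : A} (hg : U0 S g) : g ∈ unitary A := by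
  obtain ⟨a, ha, ha0, ha1⟩ := hg
  exact ha1 ▸ (ha 1).1

lemma U0.mem {S : StarSubalgebra ℂ A} {g : A} (hg : U0 S g) : g ∈ S := by
  obtain ⟨a, ha, ha0, ha1⟩ := hg
  exact ha1 ▸ (ha 1).2

lemma U0.mono {S T : StarSubalgebra ℂ A} (h : S ≤ T) {g : A} (hg : U0 S g) : U0 T g := by
  obtain ⟨a, ha, ha0, ha1⟩ := hg
  exact ⟨a, fun t => ⟨(ha t).1, h (ha t).2⟩, ha0, ha1⟩

def H (S : StarSubalgebra ℂ A) (r q : A) : Prop := ∃ g, U0 S g ∧ g * r * star g = q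

lemma H.refl (S : StarSubalgebra ℂ A) (r : A) : H S r r := ⟨1, U0.one, by simp⟩

lemma H.symm {S : StarSubalgebra ℂ A} {r q : A} (h : H S r q) : H S q r := by
  obtain ⟨g, hg, rfl⟩ := h
  refine ⟨_, hg.star, ?_⟩
  have := (Unitary.mem_iff.mp hg.unitary).1
  rw [star_star]
  calc star g * (g * r * star g) * g = (star g * g) * r * (star g * g) := by simp only [mul_assoc]
    _ = r := by simp [this]

lemma H.trans {S : StarSubalgebra ℂ A} {r q s : A} (h : H S r q) (h' : H S q s) : H S r s := by
  obtain ⟨g, hg, rfl⟩ := h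
  obtain ⟨k, hk, rfl⟩ := h'
  exact ⟨_, hk.mul hg, by simp only [star_mul, mul_assoc]⟩

lemma isUnit_near {z : A} (h : ‖z - 1‖ < 1) : IsUnit z := by
  have := isUnit_one_sub_of_norm_lt_one (x := 1 - z) (by rwa [norm_sub_rev])
  simpa using this

lemma proj_norm {r : A} (hr : IsStarProjection r) : ‖r‖ ≤ 1 := by
  have h : ‖r‖ * ‖r‖ = ‖r‖ := by
    rw [← CStarRing.norm_star_mul_self, hr.isSelfAdjoint.star_eq, hr.isIdempotentElem.eq]
  nlinarith [norm_nonneg r]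

noncomputable def Z (r q : A) : A := q * r + (1 - q) * (1 - r)

lemma Z_sub (r q : A) (hr : IsStarProjection r) : Z r q - 1 = (2 : ℂ) • ((q - r) * r) - (q - r) := by
  have := hr.isIdempotentElem.eq
  simp only [Z, sub_mul, mul_sub, this, mul_one, one_mul, two_smul]
  abel

lemma Z_near {r q : A} (hr : IsStarProjection r) (h : ‖q - r‖ < 1/4) : ‖Z r q - 1‖ < 1 := by
  rw [Z_sub r q hr]
  have h1 := norm_sub_le ((2 : ℂ) • ((q - r) * r)) (q - r)
  have h2 : ‖(2 : ℂ) • ((q - r) * r)‖ ≤ 2 * (‖q - r‖ * 1) := by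
    rw [norm_smul]
    simp only [Complex.norm_ofNat]
    gcongr
    exact (norm_mul_le _ _).trans (by gcongr; exact proj_norm hr)
  linarith

lemma Z_conj {r q : A} (hr : IsStarProjection r) (hq : IsStarProjection q) :
    Z r q * r = q * Z r q := by
  have h1 := hr.isIdempotentElem.eq
  have h2 := hq.isIdempotentElem.eq
  have h3 : ∀ x, q * (q * x) = q * x := fun x => by rw [← mul_assoc, h2]
  simp [Z, sub_mul, mul_sub, add_mul, mul_add, mul_assoc, h1, h2, h3]

lemma U0_near {S : StarSubalgebra ℂ A} (hS : IsClosed (S : Set A)) {z : A} (hz : z ∈ S)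
    (h : ‖z - 1‖ < 1) : U0 S (N z) := by
  refine ⟨⟨fun t => N (1 + (t : ℝ) • (z - 1)), N_cont (by fun_prop) fun t => ?_⟩, fun t => ⟨N_unitary ?_, N_mem S hS ?_⟩,
    ?_, ?_⟩
  any_goals
    apply isUnit_near
    simp only [add_sub_cancel_left, norm_smul, Real.norm_eq_abs, abs_of_nonneg t.2.1]
    nlinarith [t.2.1, t.2.2, norm_nonneg (z - 1)]
  · exact add_mem (one_mem _) (S.toSubalgebra.toSubmodule.smul_of_tower_mem (t:ℝ) (show z - 1 ∈ S from sub_mem hz (one_mem _)))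
  · simpa using N_of_unitary (one_mem (unitary A))
  · simp

lemma H_near {S : StarSubalgebra ℂ A} (hS : IsClosed (S : Set A)) {r q : A} 
    (hr : IsStarProjection r) (hq : IsStarProjection q) (hrS : r ∈ S) (hqS : q ∈ S)
    (h : ‖q - r‖ < 1/4) : H S r q := by
  refine ⟨N (Z r q), U0_near hS ?_ (Z_near hr h), N_conj (isUnit_near (Z_near hr h)) hr.isSelfAdjoint hq.isSelfAdjoint (Z_conj hr hq)⟩
  exact add_mem (mul_mem hqS hrS) (mul_mem (sub_mem (one_mem _) hqS) (sub_mem (one_mem _) hrS))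

/-- connectedness principle on the interval -/
lemma interval_ind (P : C(unitInterval, A)) (Q : unitInterval → Prop) (h0 : Q 0)
    (hloc : ∀ s t, ‖P t - P s‖ < 1/4 → Q s → Q t) : Q 1 := by
  have hcl : IsClopen {t | Q t} := by
    have hopen : ∀ t, {s | ‖P s - P t‖ < 1/4} ∈ 𝓝 t := fun t =>
      (isOpen_lt (by fun_prop) continuous_const).mem_nhds (by simp)
    constructor
    · rw [← isOpen_compl_iff, isOpen_iff_mem_nhds]
      intro t ht
      filter_upwards [hopen t] with s hs hQ
      exact ht (hloc s t (by rw [norm_sub_rev]; exact hs) hQ)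
    · rw [isOpen_iff_mem_nhds]
      intro t ht
      filter_upwards [hopen t] with s hs
      exact hloc t s hs ht
  have := hcl.eq_univ ⟨0, h0⟩
  exact (this ▸ mem_univ (1 : unitInterval) : (1 : unitInterval) ∈ {t | Q t})

lemma H_path {S : StarSubalgebra ℂ A} (hS : IsClosed (S : Set A)) (P : C(unitInterval, A))
    (hP : ∀ t, IsStarProjection (P t) ∧ P t ∈ S) : H S (P 0) (P 1) :=
  interval_ind P (fun t => H S (P 0) (P t)) (H.refl _ _)
    fun s t hst h => h.trans (H_near hS (hP s).1 (hP t).1 (hP s).2 (hP t).2 hst)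

end basic
end Sep18

namespace Sep18
open Set Topology
set_option linter.all false

section two
variable {A : Type u} [CStarAlgebra A] [PartialOrder A] [StarOrderedRing A]

noncomputable def Cf (f : A) : StarSubalgebra ℂ A := StarSubalgebra.centralizer ℂ {f}

lemma mem_Cf {f x : A} (hf : IsSelfAdjoint f) : x ∈ Cf f ↔ f * x = x * f := by
  rw [Cf, StarSubalgebra.mem_centralizer_iff]
  simp [hf.star_eq]

lemma Cf_closed {f : A} (hf : IsSelfAdjoint f) : IsClosed ((Cf f : StarSubalgebra ℂ A) : Set A) := by
  have : ((Cf f : StarSubalgebra ℂ A) : Set A) = {x | f * x = x * f} := by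
    ext x; exact mem_Cf hf
  rw [this]
  exact isClosed_eq (by fun_prop) (by fun_prop)

lemma pi_mul {v a : A} (ha : IsStarProjection a) (h : star v * v = a) : v * a = v := by
  have h1 := ha.isIdempotentElem.eq
  have h2 := ha.isSelfAdjoint.star_eq
  have : star (v - v * a) * (v - v * a) = 0 := by
    have h3 : ∀ x, star v * (v * x) = a * x := fun x => by rw [← mul_assoc, h]
    simp [sub_mul, mul_sub, mul_assoc, h, h1, h2, h3]
  rw [CStarRing.star_mul_self_eq_zero_iff, sub_eq_zero] at this
  exact this.symm

lemma pi_proj {v a : A} (ha : IsStarProjection a) (h : star v * v = a) :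
    IsStarProjection (v * star v) := by
  refine ⟨?_, by simp [isSelfAdjoint_iff]⟩
  show v * star v * (v * star v) = v * star v
  rw [mul_assoc, ← mul_assoc (star v), h, ← mul_assoc, pi_mul ha h]

lemma pi_mul' {v a b : A} (ha : IsStarProjection a) (h : star v * v = a) (h' : v * star v = b) :
    b * v = v := by
  rw [← h', mul_assoc, h, pi_mul ha h]

lemma star_eq_of {f x : A} (hf : IsSelfAdjoint f) (hx : IsSelfAdjoint x) (h : f * x = x) : x * f = x := by
  have := congrArg star h
  simpa [hf.star_eq, hx.star_eq] using this

lemma star_eq_of0 {f x : A} (hf : IsSelfAdjoint f) (hx : IsSelfAdjoint x) (h : f * x = 0) : x * f = 0 := by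
  have := congrArg star h
  simpa [hf.star_eq, hx.star_eq] using this

lemma rot {f X Y v : A} (hf : IsStarProjection f) (hX : IsStarProjection X) (hY : IsStarProjection Y)
    (hXY : X * Y = 0) (h1 : star v * v = X) (h2 : v * star v = Y) (hfX : f * X = X) (hfY : f * Y = Y) :
    ∃ g, U0 (Cf f) g ∧ g * X * star g = Y ∧ ∀ c, X * c = 0 → Y * c = 0 → g * c = c := by
  have hYX : Y * X = 0 := star_eq_of0 hX.isSelfAdjoint hY.isSelfAdjoint hXY
  have a1 := hX.isIdempotentElem.eq
  have a2 := hY.isIdempotentElem.eq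
  have a3 := hX.isSelfAdjoint.star_eq
  have a4 := hY.isSelfAdjoint.star_eq
  have b1 : v * X = v := pi_mul hX h1
  have b2 : Y * v = v := pi_mul' hX h1 h2
  have b3 : X * star v = star v := by simpa [a3] using congrArg star b1
  have b4 : star v * Y = star v := by simpa [a4] using congrArg star b2
  have b5 : X * v = 0 := by rw [← b2, ← mul_assoc, hXY, zero_mul]
  have b6 : v * Y = 0 := by rw [← b1, mul_assoc, hXY, mul_zero]
  have b7 : Y * star v = 0 := by simpa [a4] using congrArg star b6
  have b8 : star v * X = 0 := by simpa [a3] using congrArg star b5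
  have b9 : v * v = 0 := by
    nth_rw 1 [← b1]; rw [mul_assoc, b5, mul_zero]
  have b10 : star v * star v = 0 := by simpa using congrArg star b9
  have hXf := star_eq_of hf.isSelfAdjoint hX.isSelfAdjoint hfX
  have hYf := star_eq_of hf.isSelfAdjoint hY.isSelfAdjoint hfY
  have c1 : f * v = v := by rw [← b2, ← mul_assoc, hfY]
  have c2 : v * f = v := by rw [← b1, mul_assoc, hXf]
  have c3 : star v * f = star v := by simpa [hf.isSelfAdjoint.star_eq] using congrArg star c1
  have c4 : f * star v = star v := by simpa [hf.isSelfAdjoint.star_eq] using congrArg star c2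
  let G : ℝ → A := fun t => 1 - (X + Y) + (Real.cos t) • (X + Y) + Real.sin t • (v - star v)
  let P := X + Y
  let k := v - star v
  have p1 : P * P = P := by simp [P, mul_add, add_mul, a1, a2, hXY, hYX]
  have p2 : P * k = k := by simp [P, k, mul_sub, add_mul, b5, b2, b3, b7]
  have p3 : k * P = k := by
    simp only [P, k, sub_mul, mul_add, b1, b6, b8, b4]; abel
  have p4 : k * k = -P := by
    simp [P, k, sub_mul, mul_sub, b9, b10, h1, h2]
    abel
  have p5 : star P = P := by simp [P, a3, a4]
  have p6 : star k = -k := by simp [k]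
  have hG : ∀ t, G t = 1 - P + (Real.cos t) • P + Real.sin t • k := fun t => rfl
  have hGs : ∀ t, star (G t) = 1 - P + (Real.cos t) • P - Real.sin t • k := fun t => by
    rw [hG]; simp [p5, p6, sub_eq_add_neg]
  have key : ∀ c s : ℝ, c^2+s^2 = 1 → (1 - P + c • P + s • k) * (1 - P + c • P - s • k) = 1 := by
    intro c s hcs
    have e : (1 - P + c • P + s • k) * (1 - P + c • P - s • k) = 1 - P + (c^2+s^2) • P := by
      simp only [mul_add, add_mul, mul_sub, sub_mul, mul_one, one_mul, smul_mul_assoc, mul_smul_comm, p1, p2, p3, p4]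
      module
    rw [e, hcs]; simp
  have hU : ∀ t, G t ∈ unitary A := by
    intro t
    rw [Unitary.mem_iff, hGs, hG]
    refine ⟨?_, key _ _ (Real.cos_sq_add_sin_sq t)⟩
    have := key (Real.cos t) (-Real.sin t) (by simp)
    simpa [sub_eq_add_neg] using this
  have hGc : Continuous G := by fun_prop
  have hS : ∀ t, G t ∈ Cf f := by
    intro t
    rw [mem_Cf hf.isSelfAdjoint]
    simp [G, mul_add, add_mul, mul_sub, sub_mul, hfX, hfY, hXf, hYf, c1, c2, c3, c4]
  refine ⟨G (Real.pi/2), ⟨⟨fun t => G ((t:ℝ) * (Real.pi/2)), by fun_prop⟩, fun t => ⟨hU _, hS _⟩, by simp [G], by simp⟩, ?_, ?_⟩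
  · rw [hGs, hG]
    have d1 : P * X = X := by simp [P, add_mul, a1, hYX]
    have d2 : k * X = v := by simp [k, sub_mul, b1, b8]
    have d3 : v * P = v := by simp [P, mul_add, b1, b6]
    have d4 : v * k = -Y := by simp [k, mul_sub, b9, h2]
    simp [add_mul, sub_mul, mul_sub, d1, d2, d3, d4]
  · intro c hc hc'
    have d1 : P * c = 0 := by simp [P, add_mul, hc, hc']
    have d2 : k * c = 0 := by rw [← p3, mul_assoc, d1, mul_zero]
    rw [hG]
    simp [add_mul, sub_mul, d1, d2]

def RR0 (A : Type u) [CStarAlgebra A] : Prop :=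
  ∀ x : A, IsSelfAdjoint x → x ∈ closure {y : A | IsSelfAdjoint y ∧ IsUnit y}

lemma norm_rxr {r s x : A} (hr : IsStarProjection r) (hs : IsStarProjection s) : ‖r * x * s‖ ≤ ‖x‖ := by
  have h1 := norm_mul_le (r * x) s
  have h2 := norm_mul_le r x
  nlinarith [proj_norm hr, proj_norm hs, norm_nonneg x, norm_nonneg (r*x), norm_nonneg r, norm_nonneg s]

lemma corner_rr0 (h : RR0 A) {r x : A} (hr : IsStarProjection r) (hx : IsSelfAdjoint x) (hrx : r * x = x)
    {ε : ℝ} (hε : 0 < ε) : ∃ y y' : A, IsSelfAdjoint y ∧ IsSelfAdjoint y' ∧ r * y = y ∧ y * r = y ∧ r * y' = y' ∧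
      y' * r = y' ∧ y * y' = r ∧ y' * y = r ∧ ‖y - x‖ < ε := by
  have r1 := hr.isIdempotentElem.eq
  have r2 := hr.isSelfAdjoint.star_eq
  have r3 : ∀ x, r * (r * x) = r * x := fun x => by rw [← mul_assoc, r1]
  have hxr := star_eq_of hr.isSelfAdjoint hx hrx
  obtain ⟨δ, hδ, hδ1, hδ2⟩ : ∃ δ : ℝ, 0 < δ ∧ δ ≤ 1/2 ∧ 2 * δ < ε :=
    ⟨min (1/2) (ε/3), by positivity, min_le_left _ _, by have := min_le_right (1/2) (ε/3); linarith⟩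
  obtain ⟨a, ⟨ha, hau⟩, hd⟩ := Metric.mem_closure_iff.mp (h (x + (1 - r)) (hx.add hr.one_sub.isSelfAdjoint)) δ hδ
  rw [dist_eq_norm, norm_sub_rev] at hd
  obtain ⟨c, hac, hca⟩ : ∃ c, a * c = 1 ∧ c * a = 1 := by
    obtain ⟨w, rfl⟩ := hau
    exact ⟨_, w.mul_inv, w.inv_mul⟩
  have hc : IsSelfAdjoint c := by
    have : star c * a = 1 := by simpa [ha.star_eq] using congrArg star hac
    rw [isSelfAdjoint_iff, ← mul_one (star c), ← hac, ← mul_assoc, this, one_mul]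
  set z := 1 - r with hz
  have z1 : z * r = 0 := hr.one_sub_mul_self
  have z2 : r * z = 0 := hr.mul_one_sub_self
  have z3 : z * z = z := hr.one_sub.isIdempotentElem.eq
  have z4 : star z = z := hr.one_sub.isSelfAdjoint.star_eq
  set E := a - (x + z) with hE
  have hEz : z * E * z = z * a * z - z := by
    have : z * x = 0 := by rw [← hrx, ← mul_assoc, z1, zero_mul]
    simp [E, mul_sub, sub_mul, mul_add, add_mul, this, z3]
  have hb : IsUnit (z * a * z + r) := by
    apply isUnit_near
    have : z * a * z + r - 1 = z * E * z := by rw [hEz]; simp only [hz]; abel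
    rw [this]
    exact (norm_rxr hr.one_sub hr.one_sub).trans_lt (by linarith)
  obtain ⟨w, hw1, hw2⟩ : ∃ c, (z * a * z + r) * c = 1 ∧ c * (z * a * z + r) = 1 := by
    obtain ⟨w, hw⟩ := hb
    rw [← hw]
    exact ⟨_, w.mul_inv, w.inv_mul⟩
  have hwr : w * r = r := by
    have : (z * a * z + r) * r = r := by simp [add_mul, mul_assoc, z1, r1]
    calc w * r = w * ((z * a * z + r) * r) := by rw [this]
      _ = r := by rw [← mul_assoc, hw2, one_mul]
  have hrw : r * w = r := by
    have : r * (z * a * z + r) = r := by simp [mul_add, ← mul_assoc, z2, r1]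
    calc r * w = (r * (z * a * z + r)) * w := by rw [this]
      _ = r := by rw [mul_assoc, hw1, mul_one]
  set d := w * z with hd'
  have d1 : d * r = 0 := by rw [hd', mul_assoc, z1, mul_zero]
  have d2 : r * d = 0 := by rw [hd', ← mul_assoc, hrw, z2]
  have d3 : z * d = d := by rw [hz, sub_mul, one_mul, d2, sub_zero]
  have d3' : d * z = d := by rw [hd', mul_assoc, z3]
  have d4 : d * (a * z) = z := by
    have : w * ((z * a * z + r) * z) = z := by rw [← mul_assoc, hw2, one_mul]
    rw [hd']
    simpa [add_mul, mul_assoc, z2, z3] using this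
  have d5 : d * (a * r) = d * a - z := by
    have := d4
    simp only [hz, mul_sub, mul_one] at this ⊢
    rw [← this]; abel
  have d6 : star d = d := by
    have h5 : w * ((z * a * z + r) * star w) = star w := by rw [← mul_assoc, hw2, one_mul]
    have h6 : star (z * a * z + r) = z * a * z + r := by simp [z4, ha.star_eq, r2, mul_assoc]
    have h7 : (z * a * z + r) * star w = 1 := by
      simpa only [star_mul, h6, star_one] using congrArg star hw2
    have h8 : star w = w := by rw [← h5, h7, mul_one]
    have h9 : w * z = z * w := by rw [hz, mul_sub, sub_mul, mul_one, one_mul, hwr, hrw]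
    rw [hd', star_mul, z4, h8, h9]
  refine ⟨r * a * r - r * a * d * a * r, r * c * r, ?_, ?_, ?_, ?_, ?_, ?_, ?_⟩
  · simp [isSelfAdjoint_iff, r2, ha.star_eq, d6, mul_assoc]
  · simp [isSelfAdjoint_iff, r2, hc.star_eq, mul_assoc]
  · simp [mul_sub, mul_assoc, r3]
  · simp [sub_mul, mul_assoc, r1]
  · simp [mul_assoc, r3]
  · simp [mul_assoc, r1]
  have hyy : (r * a * r - r * a * d * a * r) * (r * c * r) = r := by
    have e1 : r * a * r * (r * c * r) = r * (a * r) * (c * r) := by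
      simp [mul_assoc, r3]
    have e2 : r * a * d * a * r * (r * c * r) = r * a * (d * (a * r)) * (c * r) := by
      simp [mul_assoc, r3]
    have e3 : ∀ x, a * (c * x) = x := fun x => by rw [← mul_assoc, hac, one_mul]
    rw [sub_mul, e1, e2, d5]
    simp only [hz, mul_sub, sub_mul, mul_assoc, e3, d1, mul_one, mul_zero, r1, one_mul]
    abel
  refine ⟨hyy, ?_, ?_⟩
  · have := congrArg star hyy
    simpa [r2, ha.star_eq, hc.star_eq, d6, mul_assoc] using this
  · have e1 : r * a * z = r * E * z := by
      simp [E, mul_sub, sub_mul, mul_add, add_mul, z2, hrx, show x * z = 0 by rw [hz, mul_sub, mul_one, hxr, sub_self]]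
    have e2 : z * a * r = z * E * r := by
      simp [E, mul_sub, sub_mul, mul_add, add_mul, z1, hxr, mul_assoc, show z * x = 0 by rw [hz, sub_mul, one_mul, hrx, sub_self]]
    have e3 : r * a * r - r * a * d * a * r - x = r * E * r - (r * E * z) * d * (z * E * r) := by
      have f1 : r * a * d * a * r = r * a * z * d * (z * a * r) := by
        conv_lhs => rw [← d3, ← d3']
        simp only [mul_assoc]
      have f2 : r * E * r = r * a * r - x := by
        simp [E, mul_sub, sub_mul, mul_add, add_mul, z2, hrx, hxr]
      rw [f1, f2, e1, e2]; abel
    have n1 : ‖d‖ ≤ 2 := by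
      have : d = z - z * E * z * d := by
        rw [hEz, sub_mul, d3]
        have : z * a * z * d = z := by
          have := congrArg star d4
          simp only [star_mul, z4, ha.star_eq, d6] at this
          rw [mul_assoc (z*a), d3]; exact this
        rw [this]; abel
      have h1 := norm_sub_le z (z * E * z * d)
      rw [← this] at h1
      have h2 := norm_mul_le (z * E * z) d
      have h3 : ‖z * E * z‖ ≤ ‖E‖ := norm_rxr hr.one_sub hr.one_sub
      have h4 := proj_norm hr.one_sub
      nlinarith [norm_nonneg d, norm_nonneg E]
    rw [e3]
    have h1 := norm_sub_le (r * E * r) ((r * E * z) * d * (z * E * r))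
    have h2 : ‖r * E * r‖ ≤ ‖E‖ := norm_rxr hr hr
    have h3 : ‖r * E * z‖ ≤ ‖E‖ := norm_rxr hr hr.one_sub
    have h4 : ‖z * E * r‖ ≤ ‖E‖ := norm_rxr hr.one_sub hr
    have h5 : ‖(r * E * z) * d * (z * E * r)‖ ≤ ‖E‖ * 2 * ‖E‖ := by
      refine (norm_mul_le _ _).trans ?_
      gcongr
      refine (norm_mul_le _ _).trans ?_
      gcongr
    nlinarith [norm_nonneg E]

end two
end Sep18

namespace Sep18
open Set Topology
set_option linter.all false

section three
variable {A : Type u} [CStarAlgebra A] [PartialOrder A] [StarOrderedRing A]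

noncomputable def Pp (s : A) : A := (1/2 : ℂ) • (1 + N s)

lemma Pp_proj {s : A} (hs : IsSelfAdjoint s) (hu : IsUnit s) : IsStarProjection (Pp s) := by
  have h1 := N_sa hs
  have h2 := (Unitary.mem_iff.mp (N_unitary hu)).1
  rw [h1.star_eq] at h2
  refine ⟨?_, ?_⟩
  · show Pp s * Pp s = Pp s
    simp only [Pp, smul_mul_smul_comm, mul_add, add_mul, h2, mul_one, one_mul]
    module
  · simp [isSelfAdjoint_iff, Pp, h1.star_eq]

lemma Pp_mem (S : StarSubalgebra ℂ A) (hS : IsClosed (S : Set A)) {a : A} (ha : a ∈ S) : Pp a ∈ S :=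
  S.smul_mem (add_mem (one_mem _) (N_mem S hS ha)) _

lemma Pp_sym {q : A} (hq : IsStarProjection q) : Pp (2 * q - 1) = q ∧ (2 * q - 1) ∈ unitary A := by
  have h1 := hq.isIdempotentElem.eq
  have h2 := hq.isSelfAdjoint.star_eq
  have : (2 * q - 1) ∈ unitary A := by
    rw [Unitary.mem_iff]
    constructor <;> 
    · simp [h2, two_mul, sub_mul, mul_sub, mul_add, add_mul, h1]
  refine ⟨?_, this⟩
  rw [Pp, N_of_unitary this, two_mul]
  module

lemma H_units {S : StarSubalgebra ℂ A} (hS : IsClosed (S : Set A)) (s : ℝ → A) (hc : Continuous s)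
    (h : ∀ t, 0 ≤ t → t ≤ 1 → IsSelfAdjoint (s t) ∧ IsUnit (s t) ∧ s t ∈ S) :
    H S (Pp (s 0)) (Pp (s 1)) := by
  have hu : ∀ t : unitInterval, IsUnit (s t) := fun t => (h t t.2.1 t.2.2).2.1
  have hcc : Continuous fun t : unitInterval => Pp (s t) :=
    Continuous.const_smul (continuous_const.add (N_cont (a := fun t : unitInterval => s t) (by fun_prop) hu)) _
  have := H_path hS ⟨fun t => Pp (s t), hcc⟩
    (fun t => ⟨Pp_proj (h t t.2.1 t.2.2).1 (hu t), Pp_mem S hS (h t t.2.1 t.2.2).2.2⟩)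
  simpa using this

lemma PL (h : RR0 A) {f r q : A} (hf : IsStarProjection f) (hr : IsStarProjection r)
    (hq : IsStarProjection q) (hfr : f * r = r) (hfq : f * q = q) :
    ∃ g, U0 (Cf f) g ∧ (g * q * star g) * r = r * (g * q * star g) := by
  have r1 := hr.isIdempotentElem.eq
  have r2 := hr.isSelfAdjoint.star_eq
  have r3 : ∀ x, r * (r * x) = r * x := fun x => by rw [← mul_assoc, r1]
  have hrf := star_eq_of hf.isSelfAdjoint hr.isSelfAdjoint hfr
  have hqf := star_eq_of hf.isSelfAdjoint hq.isSelfAdjoint hfq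
  obtain ⟨hP, hσu⟩ := Pp_sym hq
  set σ := 2 * q - 1 with hσ
  have s1 : IsSelfAdjoint σ := by
    simp [hσ, isSelfAdjoint_iff, two_mul, hq.isSelfAdjoint.star_eq]
  have s2 : σ * σ = 1 := by
    have := (Unitary.mem_iff.mp hσu).1
    rwa [s1.star_eq] at this
  have sf : σ ∈ Cf f := by
    rw [mem_Cf hf.isSelfAdjoint]
    simp [hσ, mul_sub, sub_mul, two_mul, mul_add, add_mul, hfq, hqf]
  have rS : r ∈ Cf f := by rw [mem_Cf hf.isSelfAdjoint, hfr, hrf]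
  obtain ⟨y, y', hy, hy', e1, e2, e3, e4, e5, e6, e7⟩ := corner_rr0 h hr (x := r * σ * r)
    (by simp [isSelfAdjoint_iff, r2, s1.star_eq, mul_assoc]) (by simp [mul_assoc, r3]) (ε := 1/2) (by norm_num)
  have inS : ∀ x, r * x = x → x * r = x → x ∈ Cf f := by
    intro x h1 h2
    rw [mem_Cf hf.isSelfAdjoint]
    rw [show f * x = x by rw [← h1, ← mul_assoc, hfr], show x * f = x by rw [← h2, mul_assoc, hrf]]
  have yS := inS y e1 e2
  have yS' := inS y' e3 e4
  set z := 1 - r with hz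
  have z1 : z * r = 0 := hr.one_sub_mul_self
  have z2 : r * z = 0 := hr.mul_one_sub_self
  have z3 : z * z = z := hr.one_sub.isIdempotentElem.eq
  have z4 : star z = z := hr.one_sub.isSelfAdjoint.star_eq
  have zS : z ∈ Cf f := sub_mem (one_mem _) rS
  set w := y - r * σ * r with hw
  have wS : w ∈ Cf f := sub_mem yS (mul_mem (mul_mem rS sf) rS)
  have wsa : IsSelfAdjoint w := by
    simp [hw, isSelfAdjoint_iff, hy.star_eq, r2, s1.star_eq, mul_assoc]
  have unit1 : ∀ t : ℝ, 0 ≤ t → t ≤ 1 → IsUnit (σ + t • w) := by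
    intro t h0 h1
    have : IsUnit (σ * (σ + t • w)) := by
      apply isUnit_near
      rw [mul_add, s2, add_sub_cancel_left, CStarRing.norm_mem_unitary_mul _ hσu, norm_smul, Real.norm_eq_abs, abs_of_nonneg h0]
      nlinarith [norm_nonneg w]
    have h3 := (isUnit_iff_exists.mpr ⟨σ, s2, s2⟩ : IsUnit σ).mul this
    rwa [← mul_assoc, s2, one_mul] at h3
  have H1 : H (Cf f) q (Pp (σ + w)) := by
    have := H_units (Cf_closed hf.isSelfAdjoint) (fun t => σ + t • w) (by fun_prop) 
      (fun t h0 h1 => ⟨by simp [isSelfAdjoint_iff, s1.star_eq, wsa.star_eq], unit1 t h0 h1, add_mem sf ((Cf f).smul_mem wS (t:ℂ))⟩)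
    simpa [hP] using this
  -- second path
  set b := y' * σ * z with hb
  have bb : b * b = 0 := by
    have : z * y' = 0 := by rw [← e3, ← mul_assoc, z1, zero_mul]
    rw [hb]; simp only [mul_assoc]; rw [← mul_assoc z, this]; simp
  have bS : b ∈ Cf f := mul_mem (mul_mem yS' sf) zS
  set D := y + z * σ * z - z * σ * y' * σ * z with hD
  have DS : D ∈ Cf f := sub_mem (add_mem yS (mul_mem (mul_mem zS sf) zS)) (mul_mem (mul_mem (mul_mem (mul_mem zS sf) yS') sf) zS)
  have Dsa : star D = D := by
    simp [hD, hy.star_eq, hy'.star_eq, s1.star_eq, z4, mul_assoc]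
  have Dr : D * r = r * D := by
    simp only [hD, sub_mul, add_mul, mul_sub, mul_add, e1, e2, mul_assoc, z1, mul_zero]
    simp only [← mul_assoc, z2, zero_mul]
  have id1 : star (1 + b) * D * (1 + b) = σ + w := by
    have sb : star b = z * σ * y' := by simp [hb, z4, hy'.star_eq, s1.star_eq, mul_assoc]
    have Db : D * b = r * σ * z := by
      have zy : z * y' = 0 := by rw [← e3, ← mul_assoc, z1, zero_mul]
      have : ∀ x, z * (y' * x) = 0 := fun x => by rw [← mul_assoc, zy, zero_mul]
      have h2 : ∀ x, y * (y' * x) = r * x := fun x => by rw [← mul_assoc, e5]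
      simp [hD, hb, sub_mul, add_mul, mul_assoc, this, h2]
    have bD : star b * D = z * σ * r := by
      have := congrArg star Db
      simpa [Dsa, z4, s1.star_eq, r2, mul_assoc] using this
    have bDb : star b * D * b = z * σ * y' * σ * z := by
      rw [bD, hb]; simp only [mul_assoc]
      rw [← mul_assoc r y', e3]
    have : star (1 + b) * D * (1 + b) = D + D * b + star b * D + star b * D * b := by
      simp [mul_add, add_mul]; abel
    rw [this, bDb, bD, Db, hD, hw]
    have e : σ = r * σ * r + r * σ * z + z * σ * r + z * σ * z := by
      simp only [hz, mul_sub, sub_mul, mul_one, one_mul]; abel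
    have e' := sub_eq_zero.mpr e
    rw [← sub_eq_zero, ← neg_eq_zero, ← e']
    abel
  have unitL : ∀ t : ℝ, IsUnit (1 + t • b) := fun t => by
    refine isUnit_iff_exists.mpr ⟨1 - t • b, ?_, ?_⟩ <;>
    simp [mul_add, add_mul, mul_sub, sub_mul, bb]
  have unitσ : IsUnit (σ + w) := by simpa using unit1 1 zero_le_one le_rfl
  have unitD : IsUnit D := by
    obtain ⟨l, hl⟩ := unitL 1
    rw [one_smul] at hl
    rw [← id1, ← hl] at unitσ
    have h3 := (l.isUnit.star).unit⁻¹.isUnit.mul (unitσ.mul l⁻¹.isUnit)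
    have : ((l.isUnit.star).unit⁻¹ : Aˣ) * (star (l : A) * D * l * (l⁻¹ : Aˣ)) = D := by
      have h4 : (((l.isUnit.star).unit⁻¹ : Aˣ) : A) * star (l : A) = 1 := IsUnit.val_inv_mul l.isUnit.star
      simp only [mul_assoc, Units.mul_inv, mul_one]
      rw [← mul_assoc, h4, one_mul]
    rwa [this] at h3
  have H2 : H (Cf f) (Pp D) (Pp (σ + w)) := by
    have := H_units (Cf_closed hf.isSelfAdjoint) (fun t => star (1 + t • b) * D * (1 + t • b)) (by fun_prop) 
      (fun t h0 h1 => ⟨by simp [isSelfAdjoint_iff, Dsa, mul_assoc], ((unitL t).star.mul unitD).mul (unitL t), ?_⟩)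
    · simpa only [zero_smul, one_smul, add_zero, star_one, one_mul, mul_one, id1] using this
    have : 1 + t • b ∈ Cf f := add_mem (one_mem _) ((Cf f).smul_mem bS (t:ℂ))
    exact mul_mem (mul_mem (star_mem this) DS) this
  obtain ⟨g, hg, hgq⟩ := H1.trans H2.symm
  refine ⟨g, hg, ?_⟩
  rw [hgq]
  have := Pp_mem (Cf r) (Cf_closed hr.isSelfAdjoint) ((mem_Cf hr.isSelfAdjoint).mpr Dr.symm)
  exact ((mem_Cf hr.isSelfAdjoint).mp this).symm

end three
end Sep18

namespace Sep18
open Set Topology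
set_option linter.all false

section four
variable {A : Type u} [CStarAlgebra A] [PartialOrder A] [StarOrderedRing A]

def Sub (a b : A) : Prop := ∃ v, star v * v = a ∧ b * v = v

lemma Sub.left {a b a' : A} (h : Sub a b) (ha : IsStarProjection a') (h' : a * a' = a') : Sub a' b := by
  obtain ⟨v, h1, h2⟩ := h
  refine ⟨v * a', ?_, by rw [← mul_assoc, h2]⟩
  rw [star_mul, ha.isSelfAdjoint.star_eq, mul_assoc, ← mul_assoc (star v), h1, h', ha.isIdempotentElem.eq]

lemma Sub.right {a b b' : A} (h : Sub a b) (h' : b' * b = b) : Sub a b' := by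
  obtain ⟨v, h1, h2⟩ := h
  exact ⟨v, h1, by rw [← h2, ← mul_assoc, h']⟩

lemma RL (h : RR0 A) {x a b : A} (hx : IsStarProjection x) (ha : IsStarProjection a) (hb : IsStarProjection b)
    (hab : a * b = 0) (hs : Sub x (a + b)) : ∃ t t', IsStarProjection t ∧ IsStarProjection t' ∧ t + t' = x ∧
      t * t' = 0 ∧ Sub t a ∧ Sub t' b := by
  obtain ⟨v, h1, h2⟩ := hs
  have hf : IsStarProjection (a + b) := ha.add hb hab
  have hba := star_eq_of0 ha.isSelfAdjoint hb.isSelfAdjoint hab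
  have a1 := ha.isIdempotentElem.eq
  have a2 := hb.isIdempotentElem.eq
  have a3 := ha.isSelfAdjoint.star_eq
  have a4 := hb.isSelfAdjoint.star_eq
  obtain ⟨g, hg, hc⟩ := PL h hf ha (pi_proj hx h1) (by simp [add_mul, a1, hba]) (by rw [← mul_assoc, h2])
  have gf := (mem_Cf hf.isSelfAdjoint).mp hg.mem
  have gu := (Unitary.mem_iff.mp hg.unitary).1
  set w := g * v with hw
  have w1 : star w * w = x := by
    rw [hw, star_mul, mul_assoc, ← mul_assoc (star g), gu, one_mul, h1]
  have w2 : (a + b) * w = w := by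
    rw [hw, ← mul_assoc, gf, mul_assoc, h2]
  have w3 : a * (w * star w) = w * star w * a := by
    rw [hw, star_mul]; simp only [mul_assoc] at hc ⊢; exact hc.symm
  have w4 : w * x = w := pi_mul hx w1
  have w5 : x * star w = star w := by simpa [hx.isSelfAdjoint.star_eq] using congrArg star w4
  have w6 : star w * (a + b) = star w := by simpa [a3, a4] using congrArg star w2
  have w7 : b * (w * star w) = w * star w * b := by
    have e1 : (a + b) * (w * star w) = w * star w * (a + b) := by
      rw [← mul_assoc, w2, mul_assoc w, w6]
    rw [add_mul, mul_add, w3] at e1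
    exact add_left_cancel e1
  have gen : ∀ a b : A, a * (w * star w) = w * star w * a → (star w * a * w) * (star w * b * w) = star w * (a * b) * w := by
    intro a b h
    calc (star w * a * w) * (star w * b * w) = star w * (a * (w * star w)) * b * w := by simp only [mul_assoc]
      _ = (star w * w) * star w * a * b * w := by rw [h]; simp only [mul_assoc]
      _ = _ := by rw [w1, w5]; simp only [mul_assoc]
  refine ⟨star w * a * w, star w * b * w, ⟨?_, ?_⟩, ⟨?_, ?_⟩, ?_, ?_, ⟨a * w, ?_, ?_⟩, ⟨b * w, ?_, ?_⟩⟩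
  · show _ * _ = _
    rw [gen _ _ w3, a1]
  · simp [isSelfAdjoint_iff, a3, mul_assoc]
  · show _ * _ = _
    rw [gen _ _ w7, a2]
  · simp [isSelfAdjoint_iff, a4, mul_assoc]
  · rw [← add_mul, ← mul_add, w6, w1]
  · rw [gen _ _ w3, hab, mul_zero, zero_mul]
  · rw [star_mul, a3, mul_assoc, ← mul_assoc a a, a1, mul_assoc]
  · rw [← mul_assoc, a1]
  · rw [star_mul, a4, mul_assoc, ← mul_assoc b b, a2, mul_assoc]
  · rw [← mul_assoc, a2]

def Eq2 (P Q R T : A) : Prop := ∃ a b c d : A, star a * a + star c * c = P ∧ star a * b + star c * d = 0 ∧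
  star b * b + star d * d = Q ∧ a * star a + b * star b = R ∧ a * star c + b * star d = 0 ∧
  c * star c + d * star d = T

def SEP (A : Type u) [CStarAlgebra A] : Prop := ∀ X Y : A, IsStarProjection X → IsStarProjection Y →
  Eq2 X X X Y → Eq2 X Y Y Y → ∃ v, star v * v = X ∧ v * star v = Y

lemma sep_aux {X Y c m : A} (hX : IsStarProjection X) (hY : IsStarProjection Y) (hc : IsStarProjection c)
    (hcX : c * X = 0) (hcY : c * Y = 0) (h1 : star m * m = X + c) (h2 : m * star m = Y + c) (h3 : Sub c X) :
    Eq2 X X X Y := by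
  obtain ⟨k, k1, k2⟩ := h3
  have hXc := star_eq_of0 hc.isSelfAdjoint hX.isSelfAdjoint hcX
  have hYc := star_eq_of0 hc.isSelfAdjoint hY.isSelfAdjoint hcY
  have x1 := hX.isIdempotentElem.eq
  have y1 := hY.isIdempotentElem.eq
  have c1 := hc.isIdempotentElem.eq
  have x2 := hX.isSelfAdjoint.star_eq
  have y2 := hY.isSelfAdjoint.star_eq
  have c2 := hc.isSelfAdjoint.star_eq
  have k3 : k * c = k := pi_mul hc k1
  have k4 : c * star k = star k := by simpa [c2] using congrArg star k3
  have k5 : star k * X = star k := by simpa [x2] using congrArg star k2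
  have k6 : X * star k = 0 := by rw [← k4, ← mul_assoc, hXc, zero_mul]
  have k7 : k * X = 0 := by rw [← k3, mul_assoc, hcX, mul_zero]
  have k8 : Y * star k = 0 := by rw [← k4, ← mul_assoc, hYc, zero_mul]
  have k9 : k * Y = 0 := by rw [← k3, mul_assoc, hcY, mul_zero]
  have hXc' := hX.add hc hXc
  have m1 : m * (X + c) = m := pi_mul hXc' h1
  have m2 : (Y + c) * m = m := pi_mul' hXc' h1 h2
  have m3 : (X + c) * star m = star m := by simpa [x2, c2] using congrArg star m1
  have m4 : star m * (Y + c) = star m := by simpa [y2, c2] using congrArg star m2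
  have kk : k * star k * (k * star k) = k * star k := (pi_proj hc k1).isIdempotentElem.eq
  have d1 : star (X - k * star k) = X - k * star k := by simp [x2]
  have A1 : star m * (c * m) + star m * (Y * m) = X + c := by
    rw [← mul_add, ← add_mul, add_comm c, m2, h1]
  have A2 : m * (X * star m) + m * (c * star m) = Y + c := by
    rw [← mul_add, ← add_mul, m3, h2]
  have k1' : ∀ x, star k * (k * x) = c * x := fun x => by rw [← mul_assoc, k1]
  have x1' : ∀ x, X * (X * x) = X * x := fun x => by rw [← mul_assoc, x1]
  have y1' : ∀ x, Y * (Y * x) = Y * x := fun x => by rw [← mul_assoc, y1]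
  have k2' : ∀ x, X * (k * x) = k * x := fun x => by rw [← mul_assoc, k2]
  have k3' : ∀ x, k * (c * x) = k * x := fun x => by rw [← mul_assoc, k3]
  have k4' : ∀ x, c * (star k * x) = star k * x := fun x => by rw [← mul_assoc, k4]
  have k6' : ∀ x, X * (star k * x) = 0 := fun x => by rw [← mul_assoc, k6, zero_mul]
  have k7' : ∀ x, k * (X * x) = 0 := fun x => by rw [← mul_assoc, k7, zero_mul]
  have k8' : ∀ x, Y * (star k * x) = 0 := fun x => by rw [← mul_assoc, k8, zero_mul]
  have sd : star k * (X - k * star k) = 0 := by rw [mul_sub, k5, k1', k4, sub_self]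
  have dk : (X - k * star k) * k = 0 := by rw [sub_mul, k2, mul_assoc, k1, k3, sub_self]
  have dd : (X - k * star k) * (X - k * star k) = X - k * star k := by
    rw [sub_mul, mul_assoc k, sd, mul_zero, mul_sub, x1, k2', sub_zero]
  have sd' : ∀ x, star k * ((X - k * star k) * x) = 0 := fun x => by rw [← mul_assoc, sd, zero_mul]
  have dk' : ∀ x, (X - k * star k) * (k * x) = 0 := fun x => by rw [← mul_assoc, dk, zero_mul]
  have sd'' : ∀ x, star k * (x * star k) = star k * x * star k := fun x => by rw [← mul_assoc]
  set d := X - k * star k with hd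
  refine ⟨k * m * X, k * m * star k + d, Y * m * X, Y * m * star k, ?_, ?_, ?_, ?_, ?_, ?_⟩
  · have : star (k * m * X) * (k * m * X) + star (Y * m * X) * (Y * m * X) = X * (star m * (c * m) + star m * (Y * m)) * X := by
      simp [x2, y2, mul_assoc, k1', y1', mul_add, add_mul]
    rw [this, A1]; simp [mul_add, add_mul, x1, hcX, mul_assoc]
  · have : star (k * m * X) * (k * m * star k + d) + star (Y * m * X) * (Y * m * star k) = X * (star m * (c * m) + star m * (Y * m)) * star k := by
      simp [x2, y2, mul_assoc, k1', y1', mul_add, add_mul, sd]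
    rw [this, A1]; simp [mul_add, add_mul, x1, mul_assoc, k6, k4]
  · have : star (k * m * star k + d) * (k * m * star k + d) + star (Y * m * star k) * (Y * m * star k) = k * (star m * (c * m) + star m * (Y * m)) * star k + d := by
      simp only [star_add, star_mul, star_star, y2, mul_assoc, k1', y1', mul_add, add_mul, sd, dk', d1, dd, mul_zero, zero_add, add_zero, dk]
      abel
    rw [this, A1]; simp [mul_add, add_mul, mul_assoc, k6, k4, hd]
  · have : k * m * X * star (k * m * X) + (k * m * star k + d) * star (k * m * star k + d) = k * (m * (X * star m) + m * (c * star m)) * star k + d := by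
      simp only [star_add, star_mul, star_star, x2, mul_assoc, k1', x1', mul_add, add_mul, sd, sd', dk', d1, dd, mul_zero, zero_add, add_zero, dk]
      abel
    rw [this, A2]; simp [mul_add, add_mul, mul_assoc, k8, k4, hd]
  · have : k * m * X * star (Y * m * X) + (k * m * star k + d) * star (Y * m * star k) = k * (m * (X * star m) + m * (c * star m)) * Y := by
      simp only [star_add, star_mul, star_star, x2, y2, mul_assoc, k1', x1', mul_add, add_mul, sd, sd', dk', d1, dd, mul_zero, zero_add, add_zero, dk]
    rw [this, A2]; simp [mul_add, add_mul, mul_assoc, k9, k4, hd, hcY]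
  · have : Y * m * X * star (Y * m * X) + (Y * m * star k) * star (Y * m * star k) = Y * (m * (X * star m) + m * (c * star m)) * Y := by
      simp only [star_add, star_mul, star_star, x2, y2, mul_assoc, k1', x1', mul_add, add_mul, sd, sd', dk', d1, dd, mul_zero, zero_add, add_zero, dk]
    rw [this, A2]; simp [mul_add, add_mul, mul_assoc, y1, k4, hd, hcY]

lemma SEP.cancel (h : SEP A) {X Y c m : A} (hX : IsStarProjection X) (hY : IsStarProjection Y) (hc : IsStarProjection c)
    (hcX : c * X = 0) (hcY : c * Y = 0) (h1 : star m * m = X + c) (h2 : m * star m = Y + c) (h3 : Sub c X)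
    (h4 : Sub c Y) : ∃ v, star v * v = X ∧ v * star v = Y := by
  refine h X Y hX hY (sep_aux hX hY hc hcX hcY h1 h2 h3) ?_
  obtain ⟨a, b, c, d, e1, e2, e3, e4, e5, e6⟩ := sep_aux (m := star m) hY hX hc hcY hcX (by simpa using h2) (by simpa using h1) h4
  refine ⟨star c, star a, star d, star b, ?_, ?_, ?_, ?_, ?_, ?_⟩
  · simpa using e6
  · simpa using congrArg star e5
  · simpa using e4
  · simpa [add_comm] using e1
  · simpa [add_comm] using e2
  · simpa [add_comm] using e3

end four
end Sep18

namespace Sep18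
open Set Topology
set_option linter.all false

section five
variable {A : Type u} [CStarAlgebra A] [PartialOrder A] [StarOrderedRing A]

lemma ort {a b a' b' : A} (ha : IsStarProjection a) (ha' : IsStarProjection a') (h : a * a' = a')
    (hb : b * b' = b') (hab : a * b = 0) : a' * b' = 0 := by
  have := star_eq_of ha.isSelfAdjoint ha'.isSelfAdjoint h
  rw [← this, ← hb, mul_assoc, ← mul_assoc a, hab, zero_mul, mul_zero]

lemma osym {a b : A} (ha : IsStarProjection a) (hb : IsStarProjection b) (h : a * b = 0) : b * a = 0 :=
  star_eq_of0 ha.isSelfAdjoint hb.isSelfAdjoint h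

lemma KLabs (h : RR0 A) (hS : SEP A) {r0 r1 q1 s m : A} (h0 : IsStarProjection r0) (h1 : IsStarProjection r1)
    (h2 : IsStarProjection q1) (h3 : IsStarProjection s) (o01 : r0 * r1 = 0) (o02 : r0 * q1 = 0)
    (o03 : r0 * s = 0) (o12 : r1 * q1 = 0) (o13 : r1 * s = 0) (o23 : q1 * s = 0)
    (m1 : star m * m = r0 + r1) (m2 : m * star m = r0 + q1) (k1 : Sub r0 (s + q1)) (k2 : Sub r0 (s + r1)) :
    H (Cf (r0 + r1 + q1 + s)) (r0 + r1) (r0 + q1) := by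
  have o10 := osym h0 h1 o01
  have o20 := osym h0 h2 o02
  have o30 := osym h0 h3 o03
  have o21 := osym h1 h2 o12
  have o31 := osym h1 h3 o13
  have o32 := osym h2 h3 o23
  have i0 := h0.isIdempotentElem.eq
  have i1 := h1.isIdempotentElem.eq
  have i2 := h2.isIdempotentElem.eq
  have i3 := h3.isIdempotentElem.eq
  obtain ⟨t, t', ht, ht', tt, tt0, ⟨v1, v1a, v1b⟩, st'⟩ := RL h h0 h3 h2 o32 k1
  have t'r : r0 * t' = t' := by rw [← tt, add_mul, tt0, zero_add, ht'.isIdempotentElem.eq]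
  have tr : r0 * t = t := by rw [← tt, add_mul, osym ht ht' tt0, add_zero, ht.isIdempotentElem.eq]
  have hti := pi_proj ht v1a
  have tis : s * (v1 * star v1) = v1 * star v1 := by rw [← mul_assoc, v1b]
  have w1 : v1 * t = v1 := pi_mul ht v1a
  have w2 : v1 * star v1 * v1 = v1 := pi_mul' ht v1a rfl
  obtain ⟨a, ha⟩ : ∃ a, a = v1 * star v1 := ⟨_, rfl⟩
  rw [← ha] at hti tis w2
  have ar1 : a * r1 = 0 := ort h3 hti tis i1 o31
  have hs' : IsStarProjection (s - a) := hti.sub_of_mul_eq_right h3 tis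
  have as : a * s = a := star_eq_of h3.isSelfAdjoint hti.isSelfAdjoint tis
  have ia := hti.isIdempotentElem.eq
  obtain ⟨c, t3, hc, ht3, ct, ct0, sc, ⟨v3, v3a, v3b⟩⟩ := RL h ht' (hti.add h1 ar1) hs'
    (by rw [add_mul, mul_sub, mul_sub, as, ia, o13, osym hti h1 ar1]; simp)
    (by
      have : a + r1 + (s - a) = s + r1 := by abel
      rw [this]; exact k2.left ht' t'r)
  have ct' : t' * c = c := by rw [← ct, add_mul, osym hc ht3 ct0, add_zero, hc.isIdempotentElem.eq]
  have t3t' : t' * t3 = t3 := by rw [← ct, add_mul, ct0, zero_add, ht3.isIdempotentElem.eq]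
  have tt3 : t * t3 = 0 := ort ht ht ht.isIdempotentElem.eq t3t' tt0
  have tc : t * c = 0 := ort ht ht ht.isIdempotentElem.eq ct' tt0
  have cr : r0 * c = c := by rw [← ct', ← mul_assoc, t'r]
  have t3r : r0 * t3 = t3 := by rw [← t3t', ← mul_assoc, t'r]
  have hbi := pi_proj ht3 v3a
  have w3 : v3 * t3 = v3 := pi_mul ht3 v3a
  have w4 : v3 * star v3 * v3 = v3 := pi_mul' ht3 v3a rfl
  have bs' : (s - a) * (v3 * star v3) = v3 * star v3 := by rw [← mul_assoc, v3b]
  obtain ⟨b, hb⟩ : ∃ b, b = v3 * star v3 := ⟨_, rfl⟩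
  rw [← hb] at hbi bs' w4
  have bs : s * b = b := by
    rw [← bs', ← mul_assoc, mul_sub, i3, tis]
  have ab : a * b = 0 := ort hti hti ia bs' (by rw [mul_sub, as, ia, sub_self])
  have ba := osym hti hbi ab
  have hT := ht.add ht3 tt3
  have hTi := hti.add hbi ab
  have v1s : t * star v1 = star v1 := by simpa [ht.isSelfAdjoint.star_eq] using congrArg star w1
  have v3s : t3 * star v3 = star v3 := by simpa [ht3.isSelfAdjoint.star_eq] using congrArg star w3
  have v1s' : star v1 * a = star v1 := by simpa [hti.isSelfAdjoint.star_eq] using congrArg star w2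
  have v3s' : star v3 * b = star v3 := by simpa [hbi.isSelfAdjoint.star_eq] using congrArg star w4
  have x1 : star v1 * v3 = 0 := by rw [← v1s', ← w4, mul_assoc, ← mul_assoc a, ab, zero_mul, mul_zero]
  have x2 : star v3 * v1 = 0 := by rw [← v3s', ← w2, mul_assoc, ← mul_assoc b, ba, zero_mul, mul_zero]
  have x3 : v1 * star v3 = 0 := by rw [← w1, ← v3s, mul_assoc, ← mul_assoc t, tt3, zero_mul, mul_zero]
  have x4 : v3 * star v1 = 0 := by
    rw [← w3, ← v1s, mul_assoc, ← mul_assoc t3, osym ht ht3 tt3, zero_mul, mul_zero]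
  have hf : IsStarProjection (r0 + r1 + q1 + s) :=
    ((h0.add h1 o01).add h2 (by rw [add_mul, o02, o12, add_zero])).add h3 (by simp [add_mul, o03, o13, o23])
  have fr0 : ∀ x, r0 * x = x → (r0 + r1 + q1 + s) * x = x := fun x hx => by
    rw [← hx, ← mul_assoc]; simp [add_mul, i0, o10, o20, o30]
  have fs : ∀ x, s * x = x → (r0 + r1 + q1 + s) * x = x := fun x hx => by
    rw [← hx, ← mul_assoc]; simp [add_mul, i3, o03, o13, o23]
  have rT : r0 * (t + t3) = t + t3 := by rw [mul_add, tr, t3r]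
  have sT : s * (a + b) = a + b := by rw [mul_add, tis, bs]
  have r1T : (t + t3) * r1 = 0 := ort h0 hT rT i1 o01
  have q1T : (t + t3) * q1 = 0 := ort h0 hT rT i2 o02
  have r1Ti : (a + b) * r1 = 0 := ort h3 hTi sT i1 o31
  have q1Ti : (a + b) * q1 = 0 := ort h3 hTi sT i2 o32
  have cTi : (a + b) * c = 0 := ort h3 hTi sT cr o30
  have cT : (t + t3) * c = 0 := by rw [add_mul, tc, osym hc ht3 ct0, add_zero]
  have TTi : (t + t3) * (a + b) = 0 := ort h0 hT rT sT o03
  have cr1 : c * r1 = 0 := ort h0 hc cr i1 o01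
  have cq1 : c * q1 = 0 := ort h0 hc cr i2 o02
  have er0 : r0 = (t + t3) + c := by rw [← tt, ← ct]; abel
  obtain ⟨g1, hg1, g1a, g1b⟩ := rot (v := v1 + v3) hf hT hTi TTi
    (by simp [mul_add, add_mul, v1a, v3a, x1, x2]) (by simp [mul_add, add_mul, ha, hb, x3, x4])
    (fr0 _ rT) (fs _ sT)
  have gcc : ∀ g z : A, IsStarProjection z → g * z = z → g * z * star g = z := by
    intro g z hz hg
    rw [hg]
    simpa [hz.isSelfAdjoint.star_eq] using congrArg star hg
  have g1c := gcc g1 c hc (g1b c cT cTi)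
  have g1r := gcc g1 r1 h1 (g1b r1 r1T r1Ti)
  have e1 : g1 * (r0 + r1) * star g1 = (a + b + r1) + c := by
    rw [er0]
    simp only [mul_add, add_mul] at g1a ⊢
    rw [g1c, g1r, g1a]; abel
  have H1 : H (Cf (r0 + r1 + q1 + s)) (r0 + r1) ((a + b + r1) + c) := ⟨g1, hg1, e1⟩
  refine H1.trans ?_
  have e2 : r0 + q1 = (t + t3 + q1) + c := by rw [er0]; abel
  have g1u := (Unitary.mem_iff.mp hg1.unitary).1
  have hX := hTi.add h1 r1Ti
  have hY := hT.add h2 q1T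
  have cX : c * (a + b + r1) = 0 := by rw [mul_add, osym hTi hc cTi, cr1, add_zero]
  have cY : c * (t + t3 + q1) = 0 := by rw [mul_add, osym hT hc cT, cq1, add_zero]
  have r1a : r1 * a = 0 := osym hti h1 ar1
  have br1 : b * r1 = 0 := ort h3 hbi bs i1 o31
  obtain ⟨n, n1, n2⟩ := hS.cancel (m := m * star g1) hX hY hc cX cY
    (by rw [← e1, ← m1]; simp only [star_mul, star_star, mul_assoc])
    (by rw [← e2, ← m2, star_mul, star_star, mul_assoc, ← mul_assoc (star g1), g1u, one_mul])
    (sc.right (by simp only [mul_add, add_mul, ia, ba, r1a, ar1, br1, i1]; abel))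
    ((st'.left hc ct').right (by rw [add_mul, q1T, i2, zero_add]))
  have XY : (a + b + r1) * (t + t3 + q1) = 0 := by
    rw [add_mul (a + b), mul_add (a + b) (t + t3), mul_add r1 (t + t3), osym hT hTi TTi, q1Ti, o12, osym hT h1 r1T]; simp
  obtain ⟨g2, hg2, g2a, g2b⟩ := rot hf hX hY XY n1 n2
    (by rw [mul_add, fs _ sT]; simp [add_mul, o01, i1, o21, o31])
    (by rw [mul_add, fr0 _ rT]; simp [add_mul, o02, o12, i2, o32])
  have g2c := gcc g2 c hc (g2b c (osym hc hX cX) (osym hc hY cY))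
  refine ⟨g2, hg2, ?_⟩
  rw [e2, mul_add, add_mul, g2a, g2c]

lemma KLc (h : RR0 A) (hS : SEP A) {f r q m : A} (hf : IsStarProjection f) (hr : IsStarProjection r)
    (hq : IsStarProjection q) (fr : f * r = r) (fq : f * q = q) (hc : r * q = q * r)
    (m1 : star m * m = r) (m2 : m * star m = q) (k1 : Sub r (f - r)) (k2 : Sub q (f - q)) :
    H (Cf f) r q := by
  have rf := star_eq_of hf.isSelfAdjoint hr.isSelfAdjoint fr
  have qf := star_eq_of hf.isSelfAdjoint hq.isSelfAdjoint fq
  have i1 := hr.isIdempotentElem.eq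
  have i2 := hq.isIdempotentElem.eq
  have i3 := hf.isIdempotentElem.eq
  have h0 : IsStarProjection (r * q) := hr.mul hq hc
  have a1 : r * (r * q) = r * q := by rw [← mul_assoc, i1]
  have a2 : q * (r * q) = r * q := by rw [hc, ← mul_assoc, i2]
  have a3 : (r * q) * r = r * q := by rw [mul_assoc, ← hc, a1]
  have a4 : (r * q) * q = r * q := by rw [mul_assoc, i2]
  have a5 : f * (r * q) = r * q := by rw [← mul_assoc, fr]
  have a6 : (r * q) * f = r * q := by rw [mul_assoc, qf]
  have a7 := h0.isIdempotentElem.eq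
  have h1 := h0.sub_of_mul_eq_left hr a3
  have h2 := h0.sub_of_mul_eq_left hq a4
  have h3 : IsStarProjection (f - (r + q - r * q)) := by
    refine (IsStarProjection.add_sub_mul_of_commute hc hr hq).sub_of_mul_eq_right hf ?_
    rw [mul_sub, mul_add, fr, fq, a5]
  have := KLabs h hS (m := m) h0 h1 h2 h3 
    (by simp only [mul_sub, sub_mul, mul_add, add_mul, a1, a2, a3, a4, a5, a6, a7, fr, rf, fq, qf, i1, i2, i3, ← hc]; abel)
    (by simp only [mul_sub, sub_mul, mul_add, add_mul, a1, a2, a3, a4, a5, a6, a7, fr, rf, fq, qf, i1, i2, i3, ← hc]; abel)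
    (by simp only [mul_sub, sub_mul, mul_add, add_mul, a1, a2, a3, a4, a5, a6, a7, fr, rf, fq, qf, i1, i2, i3, ← hc]; abel)
    (by simp only [mul_sub, sub_mul, mul_add, add_mul, a1, a2, a3, a4, a5, a6, a7, fr, rf, fq, qf, i1, i2, i3, ← hc]; abel)
    (by simp only [mul_sub, sub_mul, mul_add, add_mul, a1, a2, a3, a4, a5, a6, a7, fr, rf, fq, qf, i1, i2, i3, ← hc]; abel)
    (by simp only [mul_sub, sub_mul, mul_add, add_mul, a1, a2, a3, a4, a5, a6, a7, fr, rf, fq, qf, i1, i2, i3, ← hc]; abel)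
    (by rw [m1]; abel) (by rw [m2]; abel)
    (by
      have : f - (r + q - r * q) + (q - r * q) = f - r := by abel
      rw [this]; exact k1.left h0 a1)
    (by
      have : f - (r + q - r * q) + (r - r * q) = f - q := by abel
      rw [this]; exact k2.left h0 a2)
  have e : r * q + (r - r * q) + (q - r * q) + (f - (r + q - r * q)) = f := by abel
  rw [e, add_sub_cancel, add_sub_cancel] at this
  exact this

lemma KL (h : RR0 A) (hS : SEP A) {f r q m : A} (hf : IsStarProjection f) (hr : IsStarProjection r)
    (hq : IsStarProjection q) (fr : f * r = r) (fq : f * q = q) 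
    (m1 : star m * m = r) (m2 : m * star m = q) (k1 : Sub r (f - r)) (k2 : Sub q (f - q)) :
    H (Cf f) r q := by
  obtain ⟨g, hg, hc⟩ := PL h hf hr hq fr fq
  have gf := (mem_Cf hf.isSelfAdjoint).mp hg.mem
  obtain ⟨gu, gu'⟩ := (Unitary.mem_iff.mp hg.unitary)
  have H1 : H (Cf f) q (g * q * star g) := ⟨g, hg, rfl⟩
  refine H.trans (q := g * q * star g) ?_ H1.symm
  have c1 : ∀ x, star g * (g * x) = x := fun x => by rw [← mul_assoc, gu, one_mul]
  refine KLc h hS (m := g * m) hf hr ⟨?_, ?_⟩ fr ?_ hc.symm ?_ ?_ k1 ?_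
  · show _ * _ = _
    simp only [mul_assoc, c1]; rw [← mul_assoc q q, hq.isIdempotentElem.eq]
  · simp [isSelfAdjoint_iff, hq.isSelfAdjoint.star_eq, mul_assoc]
  · rw [← mul_assoc, ← mul_assoc, gf, mul_assoc g, fq]
  · rw [star_mul, mul_assoc, c1, m1]
  · rw [← m2]; simp [mul_assoc]
  · obtain ⟨v, v1, v2⟩ := k2
    have gfg : g * f * star g = f := by rw [← gf, mul_assoc, gu', mul_one]
    refine ⟨g * v * star g, ?_, ?_⟩
    · simp only [star_mul, star_star, mul_assoc, c1]; rw [← mul_assoc (star v), v1]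
    · have : f - g * q * star g = g * (f - q) * star g := by rw [mul_sub, sub_mul, gfg]
      rw [this]; simp only [mul_assoc, c1]; rw [← mul_assoc (f - q), v2]

end five
end Sep18

namespace Sep18
open Set Topology
set_option linter.all false

section six
variable {A : Type u} [CStarAlgebra A] [PartialOrder A] [StarOrderedRing A]

lemma D1 (h : RR0 A) {f p z : A} (hf : IsStarProjection f) (hp : IsStarProjection p) {ε : ℝ} (hε : 0 < ε) :
    ∃ r, IsStarProjection r ∧ f * r = r ∧ Sub r p ∧ ‖(f - r) * z * p‖ ≤ ε := by
  have f1 := hf.isIdempotentElem.eq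
  have f2 := hf.isSelfAdjoint.star_eq
  have p1 := hp.isIdempotentElem.eq
  have p2 := hp.isSelfAdjoint.star_eq
  have p1' : ∀ x, p * (p * x) = p * x := fun x => by rw [← mul_assoc, p1]
  have f1' : ∀ x, f * (f * x) = f * x := fun x => by rw [← mul_assoc, f1]
  set x := f * z * p * star z * f with hx
  have xsa : star x = x := by simp [hx, f2, p2, mul_assoc]
  have fx : f * x = x := by simp [hx, mul_assoc, f1']
  have xf : x * f = x := by simp [hx, mul_assoc, f1]
  obtain ⟨δ, hδ, hδε⟩ : ∃ δ : ℝ, 0 < δ ∧ 3 / 2 * δ ≤ ε ^ 2 := ⟨ε^2/2, by positivity, by nlinarith [sq_nonneg ε]⟩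
  obtain ⟨y, y', ysa, ysa', fy, yf, fy', yf', yy, yy', hy⟩ := corner_rr0 h hf (x := x - δ • f)
    (by simp [isSelfAdjoint_iff, xsa, f2]) (by simp [mul_sub, fx, f1]) (ε := δ/2) (by positivity)
  set s := y - (1 - f) with hs
  have ssa : IsSelfAdjoint s := by simp [hs, isSelfAdjoint_iff, ysa.star_eq, f2]
  have su : IsUnit s := by
    refine isUnit_iff_exists.mpr ⟨y' - (1 - f), ?_, ?_⟩
    · simp only [hs, mul_sub, sub_mul, yy, yf, fy', f1, one_mul, mul_one]; abel
    · simp only [hs, mul_sub, sub_mul, yy', yf', fy, f1, one_mul, mul_one]; abel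
  have fs : f * s = y := by simp [hs, mul_sub, fy, f1]
  have sf : s * f = y := by simp [hs, sub_mul, yf, f1]
  set n := N s with hn
  have nn : n * n = 1 := by
    have := (Unitary.mem_iff.mp (N_unitary su)).1
    rwa [(N_sa ssa).star_eq] at this
  have hPs := Pp_proj ssa su
  have fP : f * Pp s = Pp s * f := by
    have := Pp_mem (Cf f) (Cf_closed hf.isSelfAdjoint) ((mem_Cf hf.isSelfAdjoint).mpr (fs.trans sf.symm))
    exact (mem_Cf hf.isSelfAdjoint).mp this
  obtain ⟨g, hg⟩ : ∃ g, g = n * s := ⟨_, rfl⟩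
  have g0 : 0 ≤ g := by
    have k0 : 0 ≤ K (star s * s) := by
      unfold K
      exact cfc_nonneg fun x _ => by positivity
    have := star_left_conjugate_nonneg k0 s
    rw [hg, hn, N]
    rwa [ssa.star_eq] at this ⊢
  have ng : n * g = s := by rw [hg, ← mul_assoc, nn, one_mul]
  have Pn : Pp s * n = Pp s := by
    simp only [Pp, smul_mul_assoc, add_mul, ← hn, nn, one_mul, add_comm]
  have Pg : Pp s * s = Pp s * g := by
    calc Pp s * s = Pp s * (n * g) := by rw [ng]
      _ = _ := by rw [← mul_assoc, Pn]
  have Qn : (1 - Pp s) * n = - (1 - Pp s) := by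
    rw [sub_mul, Pn, one_mul]
    simp only [Pp, ← hn]; module
  have Qg : (1 - Pp s) * s = - ((1 - Pp s) * g) := by
    calc (1 - Pp s) * s = (1 - Pp s) * (n * g) := by rw [ng]
      _ = _ := by rw [← mul_assoc, Qn, neg_mul]
  obtain ⟨r, hr⟩ : ∃ r, r = f * Pp s := ⟨_, rfl⟩
  have hrp : IsStarProjection r := hr ▸ hf.mul hPs fP
  have fr : f * r = r := by rw [hr, ← mul_assoc, f1]
  have rf := star_eq_of hf.isSelfAdjoint hrp.isSelfAdjoint fr
  have r1 := hrp.isIdempotentElem.eq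
  have r2 := hrp.isSelfAdjoint.star_eq
  have hq : IsStarProjection (f - r) := hrp.sub_of_mul_eq_right hf fr
  have q2 := hq.isSelfAdjoint.star_eq
  have q1 := hq.isIdempotentElem.eq
  have qf : (f - r) * f = f - r := by rw [sub_mul, f1, rf]
  have fq : f * (f - r) = f - r := by rw [mul_sub, f1, fr]
  have ryr : r * y * r = r * g * r := by
    rw [← fs, ← mul_assoc, rf, hr, mul_assoc f, Pg]; simp only [mul_assoc]
  have qyq : (f - r) * y * (f - r) = - ((f - r) * g * (f - r)) := by
    have : f - r = f * (1 - Pp s) := by rw [hr, mul_sub, mul_one]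
    rw [← fs, ← mul_assoc, qf]
    nth_rw 1 [this]
    rw [mul_assoc f, Qg, this]; simp only [mul_assoc, mul_neg, neg_mul]
  obtain ⟨e, he⟩ : ∃ e, e = x - δ • f - y := ⟨_, rfl⟩
  have esa : IsSelfAdjoint e := by simp [he, isSelfAdjoint_iff, xsa, f2, ysa.star_eq]
  have en : ‖e‖ ≤ δ/2 := by rw [he, norm_sub_rev]; exact hy.le
  have am : algebraMap ℝ A ‖e‖ ≤ (δ/2) • (1:A) := by
    rw [Algebra.algebraMap_eq_smul_one, ← sub_nonneg, ← sub_smul]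
    exact smul_nonneg (by linarith) zero_le_one
  have e1 : 0 ≤ (δ/2) • (1:A) + e := by
    have := esa.neg_algebraMap_norm_le_self
    have h2 := neg_le_neg am
    have := h2.trans this
    rwa [neg_le_iff_add_nonneg'] at this
  have e2 : 0 ≤ (δ/2) • (1:A) - e := sub_nonneg.mpr (esa.le_algebraMap_norm_self.trans am)
  have hxe : x = y + δ • f + e := by rw [he]; abel
  have C1 := star_left_conjugate_nonneg e1 r
  have C2 := star_left_conjugate_nonneg e2 (f - r)
  have C3 := star_left_conjugate_nonneg g0 r
  have C4 := star_left_conjugate_nonneg g0 (f - r)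
  rw [r2] at C1 C3
  rw [q2] at C2 C4
  obtain ⟨η, hη, hη1, hη2⟩ : ∃ η : ℝ, 0 < η ∧ η ≤ 1 ∧ η ≤ δ / 2 :=
    ⟨min 1 (δ/2), by positivity, min_le_left _ _, min_le_right _ _⟩
  obtain ⟨G, hG⟩ : ∃ G, G = r * x * r + (1 - r) := ⟨_, rfl⟩
  have Ge : G - η • (1:A) = r * g * r + r * ((δ/2) • (1:A) + e) * r + (δ/2 - η) • r + (1 - η) • (1 - r) := by
    rw [hG, hxe]
    simp only [mul_add, add_mul, ryr, mul_smul_comm, smul_mul_assoc, mul_one, r1, rf]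
    module
  have GG : η • (1:A) ≤ G := by
    rw [← sub_nonneg, Ge]
    have := smul_nonneg (show 0 ≤ δ/2 - η by linarith) hrp.nonneg
    have h2 := smul_nonneg (show 0 ≤ 1 - η by linarith) hrp.one_sub.nonneg
    positivity
  have Gu : IsUnit G := by
    refine CStarAlgebra.isUnit_of_le (η • (1:A)) GG ?_
    refine ⟨smul_nonneg hη.le zero_le_one, ?_⟩
    exact (Units.mk0 η hη.ne' • (1 : Aˣ)).isUnit
  have G0 : 0 ≤ G := (smul_nonneg hη.le zero_le_one).trans GG
  have KK := K_spec G0 Gu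
  have rG : r * G = r * x * r := by
    rw [hG]; simp [mul_add, mul_sub, ← mul_assoc, r1]
  have Gr : G * r = r * x * r := by
    rw [hG]; simp [add_mul, sub_mul, mul_assoc, r1]
  have cG : K G * r = r * K G := K_comm (Gr.trans rG.symm)
  have cGG : K G * G = G * K G := K_comm (Commute.refl G)
  refine ⟨r, hrp, fr, ⟨star (K G * (r * z * p)), ?_, ?_⟩, ?_⟩
  · have : r * z * p * star (r * z * p) = G * r := by
      rw [Gr, hx]
      simp only [star_mul, r2, p2, mul_assoc, p1', fr]
      rw [← mul_assoc r f, rf]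
    rw [star_star, star_mul (K G), (K_sa G).star_eq]
    calc K G * (r * z * p) * (star (r * z * p) * K G) = K G * ((r * z * p) * star (r * z * p)) * K G := by
          simp only [mul_assoc]
      _ = K G * G * (r * K G) := by rw [this]; simp only [mul_assoc]
      _ = (K G * K G * G) * r := by rw [← cG, cGG]; simp only [mul_assoc]; rw [← mul_assoc G, ← cGG]; simp only [mul_assoc]; rw [← mul_assoc G, ← cGG, mul_assoc]
      _ = r := by rw [KK, one_mul]
  · simp only [star_mul, r2, p2, mul_assoc, p1']
  · obtain ⟨q, hq'⟩ : ∃ q, q = f - r := ⟨_, rfl⟩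
    rw [← hq'] at hq q1 q2 qf fq qyq C2 C4 ⊢
    have e3 : q * z * p * star (q * z * p) = q * x * q := by
      rw [hx]
      simp only [star_mul, q2, p2, mul_assoc, p1', fq]
      rw [← mul_assoc q f, qf]
    have e4 : (3 / 2 * δ) • (1:A) - q * x * q = q * g * q + q * ((δ/2) • (1:A) - e) * q + (3 / 2 * δ) • (1 - q) := by
      rw [hxe]
      simp only [mul_add, add_mul, mul_sub, sub_mul, qyq, mul_smul_comm, smul_mul_assoc, mul_one, q1, qf]
      module
    have e5 : ‖q * x * q‖ ≤ 3 / 2 * δ := by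
      rw [CStarAlgebra.norm_le_iff_le_algebraMap _ (by positivity) (by rw [← e3]; exact mul_star_self_nonneg _),
        Algebra.algebraMap_eq_smul_one, ← sub_nonneg, e4]
      have := smul_nonneg (show 0 ≤ 3 / 2 * δ by positivity) hq.one_sub.nonneg
      positivity
    rw [← e3, CStarRing.norm_self_mul_star] at e5
    nlinarith [norm_nonneg (q * z * p)]

inductive Reach (p : A) : A → Prop
  | base : Reach p p
  | step (e r : A) : Reach p e → IsStarProjection r → e * r = 0 → Sub r p → Reach p (e + r)

lemma Reach.proj {p e : A} (hp : IsStarProjection p) (h : Reach p e) : IsStarProjection e ∧ e * p = p := by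
  induction h with
  | base => exact ⟨hp, hp.isIdempotentElem.eq⟩
  | step e r he hr h0 hs ih =>
    refine ⟨ih.1.add hr h0, ?_⟩
    rw [add_mul, ih.2, ← ih.2, ← mul_assoc, osym ih.1 hr h0, zero_mul, add_zero]

lemma greedy (h : RR0 A) {p : A} (hp : IsStarProjection p) {ε : ℝ} (hε : 0 < ε) (Z : List A) :
    ∀ e, Reach p e → ∃ e', Reach p e' ∧ e' * e = e ∧ ∀ z ∈ Z, ‖(1 - e') * z * p‖ ≤ ε := by
  induction Z with
  | nil => exact fun e he => ⟨e, he, (he.proj hp).1.isIdempotentElem.eq, by simp⟩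
  | cons z Z ih =>
    intro e he
    have hpe := (he.proj hp).1
    obtain ⟨r, hr, fr, hs, hn⟩ := D1 h (z := z) hpe.one_sub hp hε
    have er : e * r = 0 := by rw [← fr, ← mul_assoc, hpe.mul_one_sub_self, zero_mul]
    have he1 := Reach.step e r he hr er hs
    obtain ⟨e', he', h1, h2⟩ := ih _ he1
    refine ⟨e', he', ?_, ?_⟩
    · have : (e + r) * e = e := by rw [add_mul, hpe.isIdempotentElem.eq, osym hpe hr er, add_zero]
      rw [← this, ← mul_assoc, h1]
    · intro w hw
      rcases List.mem_cons.mp hw with rfl | hw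
      · have : (1 - e') * w * p = (1 - e') * ((1 - e - r) * w * p) := by
          simp only [← mul_assoc]
          congr 2
          rw [sub_sub, mul_sub, mul_one, sub_mul, one_mul, h1]; abel
        rw [this]
        have h3 := norm_mul_le (1 - e') ((1 - e - r) * w * p)
        have h4 := proj_norm (he'.proj hp).1.one_sub
        nlinarith [norm_nonneg ((1 - e - r) * w * p)]
      · exact h2 w hw

lemma indl (h : RR0 A) (hS : SEP A) {p e : A} (hp : IsStarProjection p) (he : Reach p e) :
    ∀ u ∈ unitary A, u * e = e * u → H ⊤ (u * p * star u) p := by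
  induction he with
  | base =>
    intro u hu hc
    rw [hc, mul_assoc, (Unitary.mem_iff.mp hu).2, mul_one]
    exact H.refl _ _
  | step e r he hr h0 hs ih =>
    intro u hu hc
    obtain ⟨u1, u2⟩ := Unitary.mem_iff.mp hu
    obtain ⟨hpe, hep⟩ := he.proj hp
    have hf := hpe.add hr h0
    have c1 : ∀ x, star u * (u * x) = x := fun x => by rw [← mul_assoc, u1, one_mul]
    have i := hr.isIdempotentElem.eq
    have i2 := hr.isSelfAdjoint.star_eq
    have ii : ∀ x, r * (r * x) = r * x := fun x => by rw [← mul_assoc, i]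
    have fr : (e + r) * r = r := by rw [add_mul, h0, i, zero_add]
    have hse : Sub r e := hs.right hep
    have key := KL h hS (m := u * r) (q := u * r * star u) hf hr ⟨?_, ?_⟩ fr ?_ ?_ ?_ ?_ ?_
    · obtain ⟨g, hg, hgq⟩ := key.symm
      have gf := (mem_Cf hf.isSelfAdjoint).mp hg.mem
      have gu := mul_mem hg.unitary hu
      have c2 : g * u * r = r * (g * u) := by
        have : r * (g * u) = g * (u * r * star u) * star g * (g * u) := by rw [hgq]
        rw [this]
        simp only [mul_assoc]
        rw [← mul_assoc (star g) g, (Unitary.mem_iff.mp hg.unitary).1, one_mul, u1, mul_one]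
      have c3 : g * u * (e + r) = (e + r) * (g * u) := by rw [mul_assoc, hc, ← mul_assoc, ← gf, mul_assoc]
      rw [mul_add, add_mul (a := e), c2] at c3
      have := ih _ gu (add_right_cancel c3)
      refine H.trans ?_ this
      exact ⟨g, hg.mono le_top, by simp only [star_mul, mul_assoc]⟩
    · show _ * _ = _
      simp only [mul_assoc, c1, ii]
    · simp [isSelfAdjoint_iff, i2, mul_assoc]
    · rw [← mul_assoc, ← mul_assoc, ← hc, mul_assoc u, fr]
    · simp only [star_mul, i2, mul_assoc, c1, i]
    · simp only [star_mul, i2, mul_assoc, ii]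
    · rwa [add_sub_cancel_right]
    · obtain ⟨v, v1, v2⟩ := hse
      have : e + r - u * r * star u = u * e * star u := by
        have : u * (e + r) * star u = e + r := by rw [hc, mul_assoc, u2, mul_one]
        nth_rw 1 [← this]
        rw [mul_add, add_mul]; abel
      rw [this]
      refine ⟨u * v * star u, ?_, ?_⟩
      · simp only [star_mul, star_star, mul_assoc, c1]; rw [← mul_assoc (star v), v1]
      · simp only [mul_assoc, c1]; rw [← mul_assoc e, v2]

end six
end Sep18

namespace Sep18
open Set Topology
set_option linter.all false

section seven
variable {A : Type u} [CStarAlgebra A] [PartialOrder A] [StarOrderedRing A]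

lemma span_ind {p : A} {P : A → Prop} (h0 : P 0) (hadd : ∀ x y, P x → P y → P (x + y)) (hneg : ∀ x, P x → P (-x))
    (hgen : ∀ a b, P (a * p * b)) {y : A} (hy : y ∈ (TwoSidedIdeal.span {p} : TwoSidedIdeal A)) : P y := by
  rw [TwoSidedIdeal.mem_span_iff_mem_addSubgroup_closure] at hy
  induction hy using AddSubgroup.closure_induction with
  | mem x hx =>
    obtain ⟨w, ⟨a, -, p', hp', rfl⟩, b, -, rfl⟩ := hx
    rw [mem_singleton_iff] at hp'
    subst hp'
    exact hgen a b
  | zero => exact h0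
  | add x y _ _ hx hy => exact hadd x y hx hy
  | neg x _ hx => exact hneg x hx

def Icl (p : A) : Set A := closure ((TwoSidedIdeal.span {p} : TwoSidedIdeal A) : Set A)

lemma Icl_add {p x y : A} (hx : x ∈ Icl p) (hy : y ∈ Icl p) : x + y ∈ Icl p :=
  map_mem_closure₂ (f := fun x y => x + y) (by fun_prop) hx hy fun a ha b hb => TwoSidedIdeal.add_mem _ ha hb

lemma Icl_left {p x y : A} (hy : y ∈ Icl p) : x * y ∈ Icl p :=
  map_mem_closure (f := fun y => x * y) (by fun_prop) hy fun a ha => TwoSidedIdeal.mul_mem_left _ _ _ ha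

lemma Icl_right {p x y : A} (hy : y ∈ Icl p) : y * x ∈ Icl p :=
  map_mem_closure (f := fun y => y * x) (by fun_prop) hy fun a ha => TwoSidedIdeal.mul_mem_right _ _ _ ha

lemma Icl_smul {p y : A} (c : ℂ) (hy : y ∈ Icl p) : c • y ∈ Icl p := by
  have := Icl_left (x := c • (1 : A)) hy
  simpa using this

lemma Icl_zero {p : A} : (0 : A) ∈ Icl p := subset_closure (TwoSidedIdeal.zero_mem _)

lemma Icl_self {p : A} : p ∈ Icl p := subset_closure (TwoSidedIdeal.subset_span (mem_singleton p))

lemma Icl_star {p y : A} (hp : IsStarProjection p) (hy : y ∈ Icl p) : star y ∈ Icl p := by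
  refine map_mem_closure (f := fun y => star y) (by fun_prop) hy fun a ha => ?_
  refine span_ind (p := p) (P := fun a => star a ∈ (TwoSidedIdeal.span {p} : TwoSidedIdeal A)) ?_ ?_ ?_ ?_ ha
  · rw [star_zero]; exact TwoSidedIdeal.zero_mem _
  · intro x y hx hy; rw [star_add]; exact TwoSidedIdeal.add_mem _ hx hy
  · intro x hx; rw [star_neg]; exact TwoSidedIdeal.neg_mem _ hx
  · intro a b
    rw [star_mul, star_mul, hp.isSelfAdjoint.star_eq, ← mul_assoc]
    exact TwoSidedIdeal.mul_mem_right _ _ _ (TwoSidedIdeal.mul_mem_left _ _ _ (TwoSidedIdeal.subset_span (mem_singleton p)))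

def Bs (p : A) : Set A := {x : A | ∃ y ∈ Icl p, ∃ c : ℂ, x = y + c • (1 : A)}

lemma Bs_closed (p : A) : IsClosed (Bs p) := by
  let I : Submodule ℂ A := 
    { carrier := Icl p, add_mem' := Icl_add, zero_mem' := Icl_zero, smul_mem' := fun c x hx => Icl_smul c hx }
  have hI : IsClosed (I : Set A) := isClosed_closure
  have := Submodule.isClosed_sup_finiteDimensional I (Submodule.span ℂ {(1 : A)}) hI
  convert this using 1
  ext x
  simp only [Bs, mem_setOf_eq, SetLike.mem_coe, Submodule.mem_sup, Submodule.mem_span_singleton]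
  constructor
  · rintro ⟨y, hy, c, rfl⟩; exact ⟨y, hy, _, ⟨c, rfl⟩, rfl⟩
  · rintro ⟨y, hy, _, ⟨c, rfl⟩, rfl⟩; exact ⟨y, hy, c, rfl⟩

def BB (p : A) (hp : IsStarProjection p) : StarSubalgebra ℂ A where
  carrier := Bs p
  mul_mem' := by
    rintro _ _ ⟨y, hy, c, rfl⟩ ⟨z, hz, d, rfl⟩
    refine ⟨y * z + d • y + c • z, Icl_add (Icl_add (Icl_left hz) (Icl_smul _ hy)) (Icl_smul _ hz), c * d, ?_⟩
    simp only [mul_add, add_mul, smul_mul_assoc, mul_smul_comm, mul_one, one_mul]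
    module
  add_mem' := by
    rintro _ _ ⟨y, hy, c, rfl⟩ ⟨z, hz, d, rfl⟩
    exact ⟨y + z, Icl_add hy hz, c + d, by module⟩
  algebraMap_mem' := fun c => ⟨0, Icl_zero, c, by rw [Algebra.algebraMap_eq_smul_one, zero_add]⟩
  star_mem' := by
    rintro _ ⟨y, hy, c, rfl⟩
    exact ⟨star y, Icl_star hp hy, star c, by simp⟩

lemma approx {p : A} (hp : IsStarProjection p) {y : A} (hy : y ∈ (TwoSidedIdeal.span {p} : TwoSidedIdeal A)) :
    ∀ ε : ℝ, 0 < ε → ∃ Z : List A, ∃ δ : ℝ, 0 < δ ∧ ∀ e, IsStarProjection e →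
      (∀ z ∈ Z, ‖(1 - e) * z * p‖ ≤ δ) → ‖(1 - e) * y‖ ≤ ε ∧ ‖y * (1 - e)‖ ≤ ε := by
  refine span_ind (p := p) (P := fun y => ∀ ε : ℝ, 0 < ε → ∃ Z : List A, ∃ δ : ℝ, 0 < δ ∧ ∀ e, IsStarProjection e →
      (∀ z ∈ Z, ‖(1 - e) * z * p‖ ≤ δ) → ‖(1 - e) * y‖ ≤ ε ∧ ‖y * (1 - e)‖ ≤ ε) ?_ ?_ ?_ ?_ hy
  · intro ε hε
    exact ⟨[], 1, one_pos, fun e _ _ => by simp [hε.le]⟩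
  · intro x y hx hy ε hε
    obtain ⟨Z, δ, hδ, h1⟩ := hx (ε/2) (by positivity)
    obtain ⟨Z', δ', hδ', h2⟩ := hy (ε/2) (by positivity)
    refine ⟨Z ++ Z', min δ δ', by positivity, fun e he hz => ?_⟩
    obtain ⟨a1, a2⟩ := h1 e he fun z hz' => (hz z (by simp [hz'])).trans (min_le_left _ _)
    obtain ⟨b1, b2⟩ := h2 e he fun z hz' => (hz z (by simp [hz'])).trans (min_le_right _ _)
    rw [mul_add, add_mul]
    constructor
    · exact (norm_add_le _ _).trans (by linarith)
    · exact (norm_add_le _ _).trans (by linarith)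
  · intro x hx ε hε
    obtain ⟨Z, δ, hδ, h1⟩ := hx ε hε
    refine ⟨Z, δ, hδ, fun e he hz => ?_⟩
    simpa using h1 e he hz
  · intro a b ε hε
    refine ⟨[a, star b], ε / (1 + ‖a‖ + ‖b‖), by positivity, fun e he hz => ?_⟩
    have h1 := hz a (by simp)
    have h2 := hz (star b) (by simp)
    set δ := ε / (1 + ‖a‖ + ‖b‖) with hδ
    have hδ' : δ * (1 + ‖a‖ + ‖b‖) = ε := by rw [hδ]; field_simp
    have hd0 : 0 < δ := by positivity
    constructor
    · have : (1 - e) * (a * p * b) = (1 - e) * a * p * b := by simp only [mul_assoc]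
      rw [this]
      have := norm_mul_le ((1 - e) * a * p) b
      nlinarith [norm_nonneg a, norm_nonneg b]
    · rw [← norm_star]
      have : star (a * p * b * (1 - e)) = (1 - e) * star b * p * star a := by
        simp only [star_mul, hp.isSelfAdjoint.star_eq, he.one_sub.isSelfAdjoint.star_eq, mul_assoc]
      rw [this]
      have := norm_mul_le ((1 - e) * star b * p) (star a)
      rw [norm_star] at this
      nlinarith [norm_nonneg a, norm_nonneg b]

lemma back (h : RR0 A) (hS : SEP A) {p u : A} (hp : IsStarProjection p) (hu : u ∈ unitary A) (huB : u ∈ Bs p) :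
    H ⊤ p (u * p * star u) := by
  obtain ⟨y, hy, c, huy⟩ := huB
  obtain ⟨y0, hy0, hd⟩ := Metric.mem_closure_iff.mp hy (1/16) (by norm_num)
  rw [dist_eq_norm] at hd
  obtain ⟨Z, δ, hδ, hZ⟩ := approx hp hy0 (1/16) (by norm_num)
  obtain ⟨e, he, -, hz⟩ := greedy h hp hδ Z p Reach.base
  have hpe := (he.proj hp).1
  obtain ⟨n1, n2⟩ := hZ e hpe hz
  have m1 : ‖(1 - e) * y‖ ≤ 1/8 := by
    have : (1 - e) * y = (1 - e) * y0 + (1 - e) * (y - y0) := by rw [mul_sub]; abel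
    rw [this]
    have a1 := norm_add_le ((1 - e) * y0) ((1 - e) * (y - y0))
    have a2 := norm_mul_le (1 - e) (y - y0)
    nlinarith [proj_norm hpe.one_sub, norm_nonneg (y - y0), norm_nonneg (1 - e)]
  have m2 : ‖y * (1 - e)‖ ≤ 1/8 := by
    have : y * (1 - e) = y0 * (1 - e) + (y - y0) * (1 - e) := by rw [sub_mul]; abel
    rw [this]
    have a1 := norm_add_le (y0 * (1 - e)) ((y - y0) * (1 - e))
    have a2 := norm_mul_le (y - y0) (1 - e)
    nlinarith [proj_norm hpe.one_sub, norm_nonneg (y - y0), norm_nonneg (1 - e)]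
  obtain ⟨u1, hu1⟩ : ∃ u1, u1 = e * y * e + c • (1 : A) := ⟨_, rfl⟩
  have m3 : ‖u1 - u‖ ≤ 1/4 := by
    have : u1 - u = -((1 - e) * y + e * (y * (1 - e))) := by
      rw [hu1, huy]; simp only [mul_sub, sub_mul, mul_one, one_mul, mul_assoc]; abel
    rw [this, norm_neg]
    have a1 := norm_add_le ((1 - e) * y) (e * (y * (1 - e)))
    have a2 := norm_mul_le e (y * (1 - e))
    nlinarith [proj_norm hpe, norm_nonneg (y * (1 - e)), norm_nonneg e]
  obtain ⟨uu, uu'⟩ := Unitary.mem_iff.mp hu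
  have hz1 : ‖star u * u1 - 1‖ < 1 := by
    have : star u * u1 - 1 = star u * (u1 - u) := by rw [mul_sub, uu]
    rw [this, CStarRing.norm_mem_unitary_mul _ (Unitary.star_mem hu)]
    linarith
  have hk : U0 ⊤ (N (star u * u1)) := U0_near (S := ⊤) isClosed_univ trivial hz1
  have hNk : N (star u * u1) = star u * N u1 := by
    have : star (star u * u1) * (star u * u1) = star u1 * u1 := by
      rw [star_mul, star_star, mul_assoc, ← mul_assoc u, uu', one_mul]
    rw [N, this, N, mul_assoc]
  have u1u : IsUnit u1 := by
    have h1 := isUnit_near hz1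
    have h2 : IsUnit u := isUnit_iff_exists.mpr ⟨star u, uu', uu⟩
    have := h2.mul h1
    rwa [← mul_assoc, uu', one_mul] at this
  have hNu := N_unitary u1u
  have hc : N u1 * e = e * N u1 := by
    have e1 := hpe.isIdempotentElem.eq
    have : u1 ∈ Cf e := by
      rw [mem_Cf hpe.isSelfAdjoint, hu1]
      simp only [mul_add, add_mul, mul_smul_comm, smul_mul_assoc, mul_one, one_mul]
      rw [mul_assoc _ e e, e1, ← mul_assoc, ← mul_assoc, e1]
    exact ((mem_Cf hpe.isSelfAdjoint).mp (N_mem _ (Cf_closed hpe.isSelfAdjoint) this)).symm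
  have H1 := indl h hS hp he (N u1) hNu hc
  refine H.symm (H.trans (q := N u1 * p * star (N u1)) ?_ H1)
  refine ⟨u * (star u * N u1) * star u, ?_, ?_⟩
  · rw [hNk] at hk
    obtain ⟨γ, g1, g2, g3⟩ := hk
    refine ⟨⟨fun t => u * γ t * star u, by fun_prop⟩, fun t => ⟨?_, trivial⟩, ?_, ?_⟩
    · exact mul_mem (mul_mem hu (g1 t).1) (Unitary.star_mem hu)
    · simp [g2, uu']
    · simp [g3]
  · have c1 : ∀ x, star u * (u * x) = x := fun x => by rw [← mul_assoc, uu, one_mul]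
    have c2 : ∀ x, u * (star u * x) = x := fun x => by rw [← mul_assoc, uu', one_mul]
    simp only [star_mul, star_star, mul_assoc, c1, c2]

lemma final (h : RR0 A) (hS : SEP A) {p q : A} (hp : IsStarProjection p) (hq : IsStarProjection q) :
    (∃ f : C(unitInterval, A),
        (∀ t, IsIdempotentElem (f t) ∧ IsSelfAdjoint (f t)) ∧ f 0 = p ∧ f 1 = q)
    ↔ (q ∈ Bs p ∧ ∃ u : A, u ∈ Bs p ∧ u * star u = 1 ∧ star u * u = 1 ∧ u * p * star u = q) := by
  constructor
  · rintro ⟨f, hf, h0, h1⟩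
    have key := interval_ind f (fun t => f t ∈ Icl p ∧ ∃ u : A, u ∈ BB p hp ∧ u * star u = 1 ∧ star u * u = 1 ∧ u * p * star u = f t)
      ⟨h0 ▸ Icl_self, 1, one_mem _, by simp, by simp, by simp [h0]⟩ ?_
    · rw [h1] at key
      obtain ⟨k1, u, k2, k3⟩ := key
      exact ⟨⟨q, k1, 0, by simp⟩, u, k2, k3⟩
    · rintro s t hst ⟨k1, u, k2, k3, k4, k5⟩
      have hs : IsStarProjection (f s) := ⟨(hf s).1, (hf s).2⟩
      have ht : IsStarProjection (f t) := ⟨(hf t).1, (hf t).2⟩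
      have hz := isUnit_near (Z_near hs hst)
      have cj := N_conj hz hs.isSelfAdjoint ht.isSelfAdjoint (Z_conj hs ht)
      obtain ⟨n1, n2⟩ := Unitary.mem_iff.mp (N_unitary hz)
      have kt : f t ∈ Icl p := by rw [← cj]; exact Icl_right (Icl_left k1)
      have sB : f s ∈ BB p hp := ⟨_, k1, 0, by simp⟩
      have tB : f t ∈ BB p hp := ⟨_, kt, 0, by simp⟩
      have zB : Z (f s) (f t) ∈ BB p hp :=
        add_mem (mul_mem tB sB) (mul_mem (sub_mem (one_mem _) tB) (sub_mem (one_mem _) sB))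
      refine ⟨kt, N (Z (f s) (f t)) * u, mul_mem (N_mem _ (Bs_closed p) zB) k2, ?_, ?_, ?_⟩
      · rw [star_mul, mul_assoc, ← mul_assoc u, k3, one_mul, n2]
      · rw [star_mul, mul_assoc, ← mul_assoc _ (N _), n1, one_mul, k4]
      · calc N (Z (f s) (f t)) * u * p * star (N (Z (f s) (f t)) * u)
            = N (Z (f s) (f t)) * (u * p * star u) * star (N (Z (f s) (f t))) := by
              rw [star_mul]; simp only [mul_assoc]
          _ = f t := by rw [k5, cj]
  · rintro ⟨-, u, huB, h1, h2, rfl⟩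
    obtain ⟨g, ⟨γ, g1, g2, g3⟩, hg⟩ := back h hS hp (Unitary.mem_iff.mpr ⟨h2, h1⟩) huB
    refine ⟨⟨fun t => γ t * p * star (γ t), by fun_prop⟩, fun t => ⟨?_, ?_⟩, by simp [g2], by simp [g3, hg]⟩
    · show γ t * p * star (γ t) * (γ t * p * star (γ t)) = γ t * p * star (γ t)
      have := (Unitary.mem_iff.mp (g1 t).1).1
      calc _ = γ t * p * (star (γ t) * γ t) * p * star (γ t) := by simp only [mul_assoc]
        _ = _ := by rw [this, mul_one, mul_assoc (γ t), hp.isIdempotentElem.eq]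
    · simp [isSelfAdjoint_iff, hp.isSelfAdjoint.star_eq, mul_assoc]

end seven

section eight
variable {A : Type u} [CStarAlgebra A]

def M1 (a : A) : Matrix (Fin 1) (Fin 1) A := Matrix.of fun _ _ => a

lemma M1_mul (a b : A) : M1 a * M1 b = M1 (a * b) := by ext i j; simp [M1, Matrix.mul_apply]
lemma M1_add (a b : A) : M1 a + M1 b = M1 (a + b) := by ext i j; simp [M1]
lemma M1_zero : M1 (0 : A) = 0 := by ext i j; simp [M1]
lemma M1_star (a : A) : (M1 a).conjTranspose = M1 (star a) := by ext i j; simp [M1]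

lemma eq2_mat {P Q R T : A} (h : Eq2 P Q R T) : ∃ v : Matrix (Fin 1 ⊕ Fin 1) (Fin 1 ⊕ Fin 1) A,
    star v * v = Matrix.fromBlocks (M1 P) 0 0 (M1 Q) ∧ v * star v = Matrix.fromBlocks (M1 R) 0 0 (M1 T) := by
  obtain ⟨a, b, c, d, e1, e2, e3, e4, e5, e6⟩ := h
  have e2' : star b * a + star d * c = 0 := by simpa using congrArg star e2
  have e5' : c * star a + d * star b = 0 := by simpa using congrArg star e5
  refine ⟨Matrix.fromBlocks (M1 a) (M1 b) (M1 c) (M1 d), ?_, ?_⟩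
  · rw [Matrix.star_eq_conjTranspose, Matrix.fromBlocks_conjTranspose, Matrix.fromBlocks_multiply]
    simp only [M1_star, M1_mul, M1_add, e1, e2, e2', e3, M1_zero]
  · rw [Matrix.star_eq_conjTranspose, Matrix.fromBlocks_conjTranspose, Matrix.fromBlocks_multiply]
    simp only [M1_star, M1_mul, M1_add, e4, e5, e5', e6, M1_zero]

lemma SEP_of (hsep : ∀ (n : ℕ) (p q : Matrix (Fin n) (Fin n) A),
      IsIdempotentElem p → IsSelfAdjoint p → IsIdempotentElem q → IsSelfAdjoint q →
      (∃ v : Matrix (Fin n ⊕ Fin n) (Fin n ⊕ Fin n) A,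
        star v * v = Matrix.fromBlocks p 0 0 p ∧
        v * star v = Matrix.fromBlocks p 0 0 q) →
      (∃ v : Matrix (Fin n ⊕ Fin n) (Fin n ⊕ Fin n) A,
        star v * v = Matrix.fromBlocks p 0 0 q ∧
        v * star v = Matrix.fromBlocks q 0 0 q) →
      (∃ v : Matrix (Fin n) (Fin n) A, star v * v = p ∧ v * star v = q)) : SEP A := by
  intro X Y hX hY h1 h2
  have pr : ∀ X : A, IsStarProjection X → IsIdempotentElem (M1 X) ∧ IsSelfAdjoint (M1 X) := fun X hX =>
    ⟨by show _ * _ = _; rw [M1_mul, hX.isIdempotentElem.eq],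
     by rw [isSelfAdjoint_iff, Matrix.star_eq_conjTranspose, M1_star, hX.isSelfAdjoint.star_eq]⟩
  obtain ⟨v, v1, v2⟩ := hsep 1 (M1 X) (M1 Y) (pr X hX).1 (pr X hX).2 (pr Y hY).1 (pr Y hY).2 (eq2_mat h1) (eq2_mat h2)
  refine ⟨v 0 0, ?_, ?_⟩
  · have := congrFun (congrFun v1 0) 0
    simpa [Matrix.mul_apply, M1, Matrix.star_apply] using this
  · have := congrFun (congrFun v2 0) 0
    simpa [Matrix.mul_apply, M1, Matrix.star_apply] using this

end eight
end Sep18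

/-- `A` is a unital C*-algebra.  Real rank zero: the invertible
self-adjoint elements are dense in the self-adjoint elements.  Separativity: for all
`n` and projections `p`, `q` in `Mₙ(A)`, `p⊕p ~ p⊕q ~ q⊕q` implies `p ~ q`, where `~`
is Murray–von Neumann equivalence (`p = v*v`, `q = vv*`) and `p⊕q` is the block sum.
`B = closure(ApA) + ℂ·1`, where `closure(ApA)` is the closure of the two-sided ideal
generated by `p`.  Homotopy of projections is a continuous path of projections in `A`,
and unitary equivalence in `B` requires the implementing unitary to lie in `B`. -/
theorem stmt18 (A : Type u) [NormedRing A] [StarRing A] [CStarRing A]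
    [NormedAlgebra ℂ A] [CompleteSpace A] [StarModule ℂ A]
    (hrr0 : ∀ x : A, IsSelfAdjoint x → x ∈ closure {y : A | IsSelfAdjoint y ∧ IsUnit y})
    (hsep : ∀ (n : ℕ) (p q : Matrix (Fin n) (Fin n) A),
      IsIdempotentElem p → IsSelfAdjoint p → IsIdempotentElem q → IsSelfAdjoint q →
      (∃ v : Matrix (Fin n ⊕ Fin n) (Fin n ⊕ Fin n) A,
        star v * v = Matrix.fromBlocks p 0 0 p ∧
        v * star v = Matrix.fromBlocks p 0 0 q) →
      (∃ v : Matrix (Fin n ⊕ Fin n) (Fin n ⊕ Fin n) A,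
        star v * v = Matrix.fromBlocks p 0 0 q ∧
        v * star v = Matrix.fromBlocks q 0 0 q) →
      (∃ v : Matrix (Fin n) (Fin n) A, star v * v = p ∧ v * star v = q))
    (p q : A) (hp₁ : IsIdempotentElem p) (hp₂ : IsSelfAdjoint p)
    (hq₁ : IsIdempotentElem q) (hq₂ : IsSelfAdjoint q)
    (B : Set A)
    (hB : B = {x : A | ∃ y ∈ closure ((TwoSidedIdeal.span {p} : TwoSidedIdeal A) : Set A),
                 ∃ c : ℂ, x = y + c • (1 : A)}) :
    (∃ f : C(unitInterval, A),
        (∀ t, IsIdempotentElem (f t) ∧ IsSelfAdjoint (f t)) ∧ f 0 = p ∧ f 1 = q)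
    ↔ (q ∈ B ∧ ∃ u : A, u ∈ B ∧ u * star u = 1 ∧ star u * u = 1 ∧ u * p * star u = q) := by
  letI : CStarAlgebra A := {}
  letI := CStarAlgebra.spectralOrder A
  letI := CStarAlgebra.spectralOrderedRing A
  subst hB
  exact Sep18.final (A := A) hrr0 (Sep18.SEP_of hsep) ⟨hp₁, hp₂⟩ ⟨hq₁, hq₂⟩
end
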